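/- arXiv:1401.6991 — 12 statements merged into one kernel-verified Lean document; each statement's English description precedes it below -/
import Mathlib

section
/- Let P, Q, R : ℝ → ℝ be real-analytic with P(u) ≠ 0 for all u, let τ : ℝ → ℝ be smooth, and let φ : ℤ → ℝ → ℝ → ℝ, (n,t,u) ↦ φₙ(t,u), be smooth in (t,u) for each n. If the determining equation holds for all n ∈ ℤ and all t, u, x, z ∈ ℝ, then there exist real constants τ₁, τ₀, a₁, a₂, b₁, b₂, c₁, c₂ such that τ(t) = τ₁ t + τ₀ for all t, and φₙ(t,u) = (a₁ + (−1)ⁿ a₂) + (b₁ + (−1)ⁿ b₂) u + (c₁ + (−1)ⁿ c₂) u² for all n, t, u. -/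
/-!
Abbreviate the numerator at a fixed `u` by `S x z = P u * (x * z) + Q u * (x + z) + R u`. Then
`S x z = S z x` and `S x x` is the quadratic on the right of the determining equation, which takes
the shape `A (x - z)² + L x z (x - z) = φₙ₋₁(z) S x x - φₙ₊₁(x) S z z` with `A = ∂ₜφₙ` and `L`
symmetric. Adding the equation with `x` and `z` exchanged removes `L`. With `h = φₙ₋₁ - φₙ₊₁` the
diagonal gives `h z * S z z = 0`; testing the sum at two points where `S z z ≠ 0` gives `A = 0` and
then `h = 0`. So `φ` has period two in `n`, and consequently `∂ₜφₙ = 0` at every `u`. Freezing `z`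
at a point with `S z z ≠ 0` exhibits `φₙ₊₁` as a quadratic polynomial. Finally, as `φ` does not
depend on `t`, subtracting the equations at two times leaves `(τ′(t) - τ′(s)) S x z (x - z) = 0`.
-/

/-- The determining equation for Lie point symmetries of the generalized
Krichever–Novikov differential–difference equation
`u̇ₙ = [P(uₙ)uₙ₊₁uₙ₋₁ + Q(uₙ)(uₙ₊₁+uₙ₋₁) + R(uₙ)]/(uₙ₊₁−uₙ₋₁)`,
where `x` and `z` play the roles of `uₙ₊₁` and `uₙ₋₁`. -/
def DeterminingEq (P Q R τ : ℝ → ℝ) (φ : ℤ → ℝ → ℝ → ℝ) : Prop :=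
  ∀ (n : ℤ) (t u x z : ℝ),
    deriv (fun s => φ n s u) t * (x - z) ^ 2
      + (deriv (fun v => φ n t v) u - deriv τ t)
        * (P u * (x * z) + Q u * (x + z) + R u) * (x - z)
      - φ n t u * (deriv P u * (x * z) + deriv Q u * (x + z) + deriv R u) * (x - z)
    = φ (n - 1) t z * (P u * x ^ 2 + 2 * Q u * x + R u)
      - φ (n + 1) t x * (P u * z ^ 2 + 2 * Q u * z + R u)

open Function

section SwappedEquation

variable {K : Type*} [CommRing K] {a : K} {f g D : K → K} {L : K → K → K}

lemma two_mul_sub_sq_eq_add_swap (hL : ∀ x z, L x z = L z x)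
    (h : ∀ x z, a * (x - z) ^ 2 + L x z * (x - z) = g z * D x - f x * D z) (x z : K) :
    2 * a * (x - z) ^ 2 = (g z - f z) * D x + (g x - f x) * D z := by
  linear_combination h x z + h z x + (x - z) * hL z x

variable [IsDomain K] [NeZero (2 : K)]

lemma coeff_eq_zero_of_swap_eq (hL : ∀ x z, L x z = L z x)
    (h : ∀ x z, a * (x - z) ^ 2 + L x z * (x - z) = f z * D x - f x * D z) : a = 0 := by
  simpa [NeZero.ne (2 : K)] using two_mul_sub_sq_eq_add_swap hL h 1 0

lemma eq_of_swap_eq {v w : K} (hL : ∀ x z, L x z = L z x)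
    (h : ∀ x z, a * (x - z) ^ 2 + L x z * (x - z) = g z * D x - f x * D z)
    (hvw : v ≠ w) (hv : D v ≠ 0) (hw : D w ≠ 0) : f = g := by
  have hsum := two_mul_sub_sq_eq_add_swap hL h
  have hdiag (z : K) : (g z - f z) * D z = 0 := by linear_combination -h z z
  have hgf {z : K} (hz : D z ≠ 0) : g z - f z = 0 := (mul_eq_zero.mp (hdiag z)).resolve_right hz
  have ha : a = 0 := by
    simpa [hgf hv, hgf hw, NeZero.ne (2 : K), sub_ne_zero.mpr hvw] using hsum v w
  ext z
  have hzv_sum := hsum z v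
  simp only [ha, hgf hv, mul_zero, zero_mul, zero_add] at hzv_sum
  exact (sub_eq_zero.mp ((mul_eq_zero.mp hzv_sum.symm).resolve_right hv)).symm

end SwappedEquation

/-- The polar form of the quadratic polynomial `p x² + 2 q x + r`: the symmetric function, affine in
each argument, that equals it on the diagonal. At `(P u, Q u, R u)` it is the numerator of the
generalized Krichever–Novikov equation. -/
def polarForm {K : Type*} [CommRing K] (p q r x z : K) : K :=
  p * (x * z) + q * (x + z) + r

section PolarForm

variable {K : Type*}

lemma polarForm_comm [CommRing K] (p q r x z : K) : polarForm p q r x z = polarForm p q r z x := by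
  unfold polarForm; ring

lemma exists_ne_polarForm_ne_zero [CommRing K] [IsDomain K] [NeZero (2 : K)] {p q r : K}
    (hpqr : p ≠ 0 ∨ q ≠ 0 ∨ r ≠ 0) : ∃ x z, x ≠ z ∧ polarForm p q r x z ≠ 0 := by
  by_contra! hzero
  have h₁ : q + r = 0 := by simpa [polarForm] using hzero 0 1 zero_ne_one
  have h₂ : -q + r = 0 := by simpa [polarForm] using hzero 0 (-1) (by simp)
  have h₃ : -p + r = 0 := by
    have hne : (1 : K) ≠ -1 := fun h => NeZero.ne (2 : K) (by linear_combination h)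
    simpa [polarForm] using hzero 1 (-1) hne
  have hr : r = 0 :=
    (mul_eq_zero.mp (by linear_combination h₁ + h₂ : 2 * r = 0)).resolve_left (NeZero.ne 2)
  simp_all

open Polynomial in
lemma finite_setOf_polarForm_self_eq_zero [CommRing K] [IsDomain K] [NeZero (2 : K)] {p q r : K}
    (hpqr : p ≠ 0 ∨ q ≠ 0 ∨ r ≠ 0) : {x | polarForm p q r x x = 0}.Finite := by
  let F : K[X] := C p * X ^ 2 + C (2 * q) * X + C r
  have hF : F ≠ 0 := by
    intro hF
    have hcoeff (k : ℕ) : F.coeff k = 0 := by rw [hF, coeff_zero]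
    have hp : p = 0 := by simpa [F, coeff_X, coeff_C] using hcoeff 2
    have hq : q = 0 := by simpa [F, coeff_X, coeff_C, NeZero.ne (2 : K)] using hcoeff 1
    have hr : r = 0 := by simpa [F, coeff_X, coeff_C] using hcoeff 0
    simp_all
  have heval (x : K) : F.eval x = polarForm p q r x x := by
    simp only [F, polarForm, eval_add, eval_mul, eval_C, eval_pow, eval_X]
    ring
  exact (finite_setOfPred_isRoot hF).subset fun x hx => (heval x).trans hx

lemma exists_ne_polarForm_self_ne_zero [CommRing K] [IsDomain K] [Infinite K] [NeZero (2 : K)]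
    {p q r : K} (hpqr : p ≠ 0 ∨ q ≠ 0 ∨ r ≠ 0) :
    ∃ v w, v ≠ w ∧ polarForm p q r v v ≠ 0 ∧ polarForm p q r w w ≠ 0 := by
  obtain ⟨v, hv, w, hw, hvw⟩ :=
    (finite_setOf_polarForm_self_eq_zero hpqr).infinite_compl.nontrivial
  exact ⟨v, w, hvw, hv, hw⟩

lemma exists_eq_quadratic_of_polarForm [Field K] {p q r p' q' r' a k w : K} {f : K → K}
    (hw : polarForm p q r w w ≠ 0)
    (h : ∀ x, a * (x - w) ^ 2 + polarForm p' q' r' x w * (x - w)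
      = k * polarForm p q r x x - f x * polarForm p q r w w) :
    ∃ α β γ : K, ∀ x, f x = α + β * x + γ * x ^ 2 := by
  set d := polarForm p q r w w
  -- The hypothesis solved for `f x`, with `polarForm p' q' r' x w` expanded as
  -- `(p' w + q') x + (q' w + r')`.
  refine ⟨(k * r - a * w ^ 2 + (q' * w + r') * w) / d,
    (k * (2 * q) + 2 * a * w + (p' * w + q') * w - (q' * w + r')) / d,
    (k * p - a - (p' * w + q')) / d, fun x => ?_⟩
  have hx := h x
  simp only [polarForm] at hx
  field_simp
  linear_combination hx

end PolarForm

lemma eq_half_add_neg_one_zpow_mul_of_periodic_two {K : Type*} [Field K] [NeZero (2 : K)]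
    {f : ℤ → K} (hf : Periodic f 2) (n : ℤ) :
    f n = (f 0 + f 1) / 2 + (-1) ^ n * ((f 0 - f 1) / 2) := by
  have h2 : (2 : K) ≠ 0 := NeZero.ne 2
  rcases n.even_or_odd' with ⟨k, rfl | rfl⟩
  · rw [(even_two_mul k).neg_one_zpow, mul_comm, ← smul_eq_mul k, hf.zsmul_eq]
    field_simp
    ring
  · rw [(odd_two_mul_add_one k).neg_one_zpow, add_comm, mul_comm, ← smul_eq_mul k, hf.zsmul k 1]
    field_simp
    ring

namespace DeterminingEq

variable {P Q R τ : ℝ → ℝ} {φ : ℤ → ℝ → ℝ → ℝ} {u₀ : ℝ}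

lemma polarForm_eq (h : DeterminingEq P Q R τ φ) (n : ℤ) (t u x z : ℝ) :
    letI b := deriv (φ n t) u - deriv τ t
    letI c := φ n t u
    deriv (fun s => φ n s u) t * (x - z) ^ 2
        + polarForm (b * P u - c * deriv P u) (b * Q u - c * deriv Q u)
          (b * R u - c * deriv R u) x z * (x - z)
      = φ (n - 1) t z * polarForm (P u) (Q u) (R u) x x
        - φ (n + 1) t x * polarForm (P u) (Q u) (R u) z z := by
  unfold polarForm
  linear_combination h n t u x z

lemma periodic_two (h : DeterminingEq P Q R τ φ) (h₀ : P u₀ ≠ 0 ∨ Q u₀ ≠ 0 ∨ R u₀ ≠ 0) :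
    Periodic φ 2 := by
  obtain ⟨v, w, hvw, hv, hw⟩ := exists_ne_polarForm_self_ne_zero h₀
  have hstep (n : ℤ) : φ (n + 1) = φ (n - 1) := funext fun t =>
    eq_of_swap_eq (polarForm_comm _ _ _) (h.polarForm_eq n t u₀) hvw hv hw
  intro n
  have hn := hstep (n + 1)
  rwa [add_assoc, one_add_one_eq_two, add_sub_cancel_right] at hn

lemma deriv_time_eq_zero (h : DeterminingEq P Q R τ φ) (hper : Periodic φ 2) (n : ℤ) (t u : ℝ) :
    deriv (fun s => φ n s u) t = 0 := by
  have hn : φ (n - 1) = φ (n + 1) := by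
    rw [← hper (n - 1)]
    congr 1
    ring
  have hswap := h.polarForm_eq n t u
  rw [hn] at hswap
  exact coeff_eq_zero_of_swap_eq (polarForm_comm _ _ _) hswap

lemma exists_eq_quadratic (h : DeterminingEq P Q R τ φ) (h₀ : P u₀ ≠ 0 ∨ Q u₀ ≠ 0 ∨ R u₀ ≠ 0)
    (n : ℤ) (t : ℝ) : ∃ α β γ : ℝ, ∀ u, φ n t u = α + β * u + γ * u ^ 2 := by
  obtain ⟨w, -, -, hw, -⟩ := exists_ne_polarForm_self_ne_zero h₀
  have hn := h.polarForm_eq (n - 1) t u₀ (z := w)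
  rw [sub_add_cancel] at hn
  exact exists_eq_quadratic_of_polarForm hw hn

lemma deriv_tau_eq (h : DeterminingEq P Q R τ φ) (h₀ : P u₀ ≠ 0 ∨ Q u₀ ≠ 0 ∨ R u₀ ≠ 0)
    (hφ : ∀ n s t, φ n s = φ n t) (s t : ℝ) : deriv τ s = deriv τ t := by
  obtain ⟨x, z, hxz, hS⟩ := exists_ne_polarForm_ne_zero h₀
  have hs := h 0 s u₀ x z
  rw [hφ 0 s t, hφ (0 - 1) s t, hφ (0 + 1) s t] at hs
  have hconst (r : ℝ) : deriv (fun s => φ 0 s u₀) r = 0 := by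
    simp [funext fun s => congrFun (hφ 0 s 0) u₀]
  have hdiff : (deriv τ s - deriv τ t) * (polarForm (P u₀) (Q u₀) (R u₀) x z * (x - z)) = 0 := by
    unfold polarForm
    linear_combination h 0 t u₀ x z - hs + (hconst s - hconst t) * (x - z) ^ 2
  exact sub_eq_zero.mp
    ((mul_eq_zero.mp hdiff).resolve_right (mul_ne_zero hS (sub_ne_zero.mpr hxz)))

end DeterminingEq

theorem symmetry_vector_field_form_general {P Q R τ : ℝ → ℝ} {φ : ℤ → ℝ → ℝ → ℝ} {u₀ : ℝ}
    (h₀ : P u₀ ≠ 0 ∨ Q u₀ ≠ 0 ∨ R u₀ ≠ 0) (hτ : Differentiable ℝ τ)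
    (hφ : ∀ n u, Differentiable ℝ fun t => φ n t u) (hdet : DeterminingEq P Q R τ φ) :
    ∃ τ₁ τ₀ a₁ a₂ b₁ b₂ c₁ c₂ : ℝ,
      (∀ t : ℝ, τ t = τ₁ * t + τ₀) ∧
      (∀ (n : ℤ) (t u : ℝ),
        φ n t u = (a₁ + (-1 : ℝ) ^ n * a₂) + (b₁ + (-1 : ℝ) ^ n * b₂) * u
          + (c₁ + (-1 : ℝ) ^ n * c₂) * u ^ 2) := by
  have hper : Periodic φ 2 := hdet.periodic_two h₀
  have htime (n : ℤ) (s t : ℝ) : φ n s = φ n t := funext fun u =>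
    is_const_of_deriv_eq_zero (hφ n u) (fun r => hdet.deriv_time_eq_zero hper n r u) s t
  obtain ⟨τ₀, hτ₀⟩ := isOpen_univ.exists_eq_add_of_deriv_eq (g := fun t => deriv τ 0 * t)
    isPreconnected_univ hτ.differentiableOn (by fun_prop) fun t _ => by
      simpa using hdet.deriv_tau_eq h₀ htime t 0
  obtain ⟨a, b, c, heven⟩ := hdet.exists_eq_quadratic h₀ 0 0
  obtain ⟨a', b', c', hodd⟩ := hdet.exists_eq_quadratic h₀ 1 0
  refine ⟨deriv τ 0, τ₀, (a + a') / 2, (a - a') / 2, (b + b') / 2, (b - b') / 2,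
    (c + c') / 2, (c - c') / 2, fun t => hτ₀ (Set.mem_univ t), fun n t u => ?_⟩
  have hparity := eq_half_add_neg_one_zpow_mul_of_periodic_two (hper.comp fun ψ => ψ 0 u) n
  simp only [comp_apply, heven, hodd] at hparity
  rw [htime n t 0, hparity]
  ring

/-- If `P, Q, R` are real-analytic with `P` nowhere vanishing, `τ` is smooth,
each `φₙ` is smooth in `(t,u)`, and the determining equation holds, then `τ`
is affine in `t` and `φₙ(t,u) = αₙ + βₙ u + γₙ u²` with
`αₙ = a₁ + (−1)ⁿ a₂`, `βₙ = b₁ + (−1)ⁿ b₂`, `γₙ = c₁ + (−1)ⁿ c₂`. -/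
theorem symmetry_vector_field_form
    (P Q R : ℝ → ℝ) (τ : ℝ → ℝ) (φ : ℤ → ℝ → ℝ → ℝ)
    (hPan : ∀ u : ℝ, AnalyticAt ℝ P u)
    (hQan : ∀ u : ℝ, AnalyticAt ℝ Q u)
    (hRan : ∀ u : ℝ, AnalyticAt ℝ R u)
    (hP0 : ∀ u : ℝ, P u ≠ 0)
    (hτ : ContDiff ℝ (⊤ : ℕ∞) τ)
    (hφ : ∀ n : ℤ, ContDiff ℝ (⊤ : ℕ∞) (fun p : ℝ × ℝ => φ n p.1 p.2))
    (hdet : DeterminingEq P Q R τ φ) :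
    ∃ τ₁ τ₀ a₁ a₂ b₁ b₂ c₁ c₂ : ℝ,
      (∀ t : ℝ, τ t = τ₁ * t + τ₀) ∧
      (∀ (n : ℤ) (t u : ℝ),
        φ n t u = (a₁ + (-1 : ℝ) ^ n * a₂) + (b₁ + (-1 : ℝ) ^ n * b₂) * u
          + (c₁ + (-1 : ℝ) ^ n * c₂) * u ^ 2) := by
  exact symmetry_vector_field_form_general (Or.inl (hP0 0)) (hτ.differentiable (by simp))
    (fun n u => ((hφ n).differentiable (by simp)).comp
      (by fun_prop : Differentiable ℝ fun t : ℝ => (t, u))) hdet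
end

section
/- Let P, Q, R : ℝ → ℝ be differentiable with P(u) ≠ 0 for all u, let τ : ℝ → ℝ be differentiable, and let φ : ℤ → ℝ → ℝ → ℝ be such that each φₙ(t,·) is twice continuously differentiable in u and differentiable in t. If the determining equation holds for all n ∈ ℤ and all t, u, x, z ∈ ℝ, then for all n ∈ ℤ, t ∈ ℝ and all x, y ∈ ℝ one has ∂²ᵤφₙ₊₁(t,x) = ∂²ᵤφₙ₋₁(t,y); in particular ∂²ᵤφₙ(t,u) is independent of u. -/
/-! Freeze `n`, `t` and `u` and write `f x = φₙ₊₁(t, x)`, `g z = φₙ₋₁(t, z)` and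
`D x = P(u) x² + 2 Q(u) x + R(u)`. The equation becomes
`(x - z) (α x z + β x + γ z + δ) = g z * D x - f x * D z` with constants `α, β, γ, δ`.
Choosing `z` with `D z ≠ 0` shows that `f` is a polynomial of degree at most `2`, and choosing `x`
with `D x ≠ 0` shows the same for `g`. On the diagonal `x = z` the left-hand side vanishes, so
`f * D = g * D`, and the nonzero polynomial `D` cancels. -/

/-- The space of functions `K → K` that are evaluations of a polynomial of degree at most `n`.
Membership is a statement about functions, so that `φₙ(t, ·)` need not be known to be a polynomial
beforehand. -/
noncomputable def polynomialFunctionsLE (K : Type*) [CommSemiring K] (n : ℕ) :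
    Submodule K (K → K) :=
  (Polynomial.degreeLE K n).map (LinearMap.pi Polynomial.leval)

namespace polynomialFunctionsLE

open Polynomial

section CommSemiring

variable {K : Type*} [CommSemiring K] {n : ℕ} {f : K → K}

theorem mem_iff :
    f ∈ polynomialFunctionsLE K n ↔ ∃ p : K[X], p.natDegree ≤ n ∧ (fun x => p.eval x) = f := by
  simp only [polynomialFunctionsLE, Submodule.mem_map, mem_degreeLE, natDegree_le_iff_degree_le]
  rfl

theorem quadratic_mem (a b c : K) :
    (fun x => a * x ^ 2 + b * x + c) ∈ polynomialFunctionsLE K 2 :=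
  mem_iff.2 ⟨C a * X ^ 2 + C b * X + C c, natDegree_quadratic_le, by simp⟩

theorem apply_eq_apply (hf : f ∈ polynomialFunctionsLE K 0) (x y : K) : f x = f y := by
  obtain ⟨p, hp, rfl⟩ := mem_iff.1 hf
  rw [eq_C_of_natDegree_le_zero hp]
  simp only [eval_C]

end CommSemiring

section Derivative

variable {𝕜 : Type*} [NontriviallyNormedField 𝕜] {n : ℕ} {f : 𝕜 → 𝕜}

theorem deriv_mem (hf : f ∈ polynomialFunctionsLE 𝕜 (n + 1)) :
    deriv f ∈ polynomialFunctionsLE 𝕜 n := by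
  obtain ⟨p, hp, rfl⟩ := mem_iff.1 hf
  exact mem_iff.2 ⟨derivative p, (natDegree_derivative_le p).trans (Nat.sub_le_of_le_add hp),
    funext fun _ => p.deriv.symm⟩

theorem deriv_deriv_eq (hf : f ∈ polynomialFunctionsLE 𝕜 2) (x y : 𝕜) :
    deriv (deriv f) x = deriv (deriv f) y :=
  apply_eq_apply (deriv_mem (deriv_mem hf)) x y

end Derivative

theorem mul_right_cancel {K : Type*} [CommRing K] [IsDomain K] [Infinite K] {k m n : ℕ}
    {D f g : K → K} (hD : D ∈ polynomialFunctionsLE K k) (hD0 : D ≠ 0)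
    (hf : f ∈ polynomialFunctionsLE K m) (hg : g ∈ polynomialFunctionsLE K n)
    (h : f * D = g * D) : f = g := by
  obtain ⟨d, -, rfl⟩ := mem_iff.1 hD
  obtain ⟨p, -, rfl⟩ := mem_iff.1 hf
  obtain ⟨q, -, rfl⟩ := mem_iff.1 hg
  have hd : d ≠ 0 := by
    rintro rfl
    exact hD0 (funext fun _ => eval_zero)
  have hpq : p * d = q * d := Polynomial.funext fun x => by
    simpa only [eval_mul, Pi.mul_apply] using congrFun h x
  rw [mul_right_cancel₀ hd hpq]

section CrossDifference

variable {K : Type*} [Field K] {n : ℕ} {D f g : K → K} {S : K → K → K}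

theorem left_mem_of_cross_difference (hD : D ∈ polynomialFunctionsLE K n) (hD0 : D ≠ 0)
    (hS : ∀ z, (fun x => S x z) ∈ polynomialFunctionsLE K n)
    (h : ∀ x z, S x z = g z * D x - f x * D z) : f ∈ polynomialFunctionsLE K n := by
  obtain ⟨w, hw⟩ : ∃ w, D w ≠ 0 := Function.ne_iff.1 hD0
  have hfw : D w • f = g w • D - fun x => S x w := by
    ext x
    simp only [Pi.smul_apply, Pi.sub_apply, smul_eq_mul]
    linear_combination h x w
  rw [← Submodule.smul_mem_iff _ hw, hfw]
  exact sub_mem (Submodule.smul_mem _ _ hD) (hS w)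

theorem eq_and_mem_of_cross_difference [Infinite K] (hD : D ∈ polynomialFunctionsLE K n)
    (hD0 : D ≠ 0) (hSx : ∀ z, (fun x => S x z) ∈ polynomialFunctionsLE K n)
    (hSz : ∀ x, S x ∈ polynomialFunctionsLE K n) (hdiag : ∀ x, S x x = 0)
    (h : ∀ x z, S x z = g z * D x - f x * D z) : f = g ∧ f ∈ polynomialFunctionsLE K n := by
  have hf : f ∈ polynomialFunctionsLE K n := left_mem_of_cross_difference hD hD0 hSx h
  -- Exchanging `x` and `z` and changing the sign of `S` swaps the roles of `f` and `g`.
  have hg : g ∈ polynomialFunctionsLE K n :=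
    left_mem_of_cross_difference (S := fun z x => -S x z) (g := f) hD hD0
      (fun x => neg_mem (hSz x)) fun z x => by linear_combination -h x z
  have hfg : f * D = g * D := by
    ext x
    simp only [Pi.mul_apply]
    linear_combination h x x - hdiag x
  exact ⟨mul_right_cancel hD hD0 hf hg hfg, hf⟩

theorem eq_and_mem_of_sub_mul_bilinear [Infinite K] (hD : D ∈ polynomialFunctionsLE K 2)
    (hD0 : D ≠ 0) (α β γ δ : K)
    (h : ∀ x z, (x - z) * (α * (x * z) + β * x + γ * z + δ) = g z * D x - f x * D z) :
    f = g ∧ f ∈ polynomialFunctionsLE K 2 := by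
  refine eq_and_mem_of_cross_difference hD hD0 (fun z => ?_) (fun x => ?_) (fun x => ?_) h
  · convert quadratic_mem (α * z + β) (γ * z + δ - z * (α * z + β)) (-z * (γ * z + δ)) using 2
    ring
  · convert quadratic_mem (-(α * x + γ)) (x * (α * x + γ) - (β * x + δ)) (x * (β * x + δ)) using 2
    ring
  · rw [sub_self, zero_mul]

end CrossDifference

end polynomialFunctionsLE

theorem quadratic_ne_zero {K : Type*} [CommRing K] [NoZeroDivisors K] [NeZero (2 : K)]
    {p q r : K} (h : ¬(p = 0 ∧ q = 0 ∧ r = 0)) : (fun x => p * x ^ 2 + 2 * q * x + r) ≠ 0 := by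
  intro h0
  have hx (x : K) : p * x ^ 2 + 2 * q * x + r = 0 := congrFun h0 x
  have hr : r = 0 := by linear_combination hx 0
  have hp : 2 * p = 0 := by linear_combination hx 1 + hx (-1) - 2 * hr
  have hq : 2 * (2 * q) = 0 := by linear_combination hx 1 - hx (-1)
  exact h ⟨by simpa [two_ne_zero] using hp, by simpa [two_ne_zero] using hq, hr⟩

theorem second_derivative_relation_general {P Q R τ : ℝ → ℝ} {φ : ℤ → ℝ → ℝ → ℝ}
    (hdet : DeterminingEq P Q R τ φ) {u : ℝ} (hu : ¬(P u = 0 ∧ Q u = 0 ∧ R u = 0))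
    (n : ℤ) (t : ℝ) :
    φ (n + 1) t = φ (n - 1) t ∧ φ (n + 1) t ∈ polynomialFunctionsLE ℝ 2 := by
  let A := deriv (fun s => φ n s u) t
  let B := deriv (fun v => φ n t v) u - deriv τ t
  refine polynomialFunctionsLE.eq_and_mem_of_sub_mul_bilinear
    (polynomialFunctionsLE.quadratic_mem (P u) (2 * Q u) (R u)) (quadratic_ne_zero hu)
    (B * P u - φ n t u * deriv P u) (A + (B * Q u - φ n t u * deriv Q u))
    (-A + (B * Q u - φ n t u * deriv Q u)) (B * R u - φ n t u * deriv R u) fun x z => ?_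
  linear_combination hdet n t u x z

/-- If the determining equation holds (with `P` nowhere vanishing), then
`∂²ᵤφₙ₊₁(t,x) = ∂²ᵤφₙ₋₁(t,y)` for all `n, t, x, y`; in particular the second
`u`-derivative of `φₙ` is independent of `u`. -/
theorem second_derivative_relation
    (P Q R : ℝ → ℝ) (τ : ℝ → ℝ) (φ : ℤ → ℝ → ℝ → ℝ)
    (hPd : Differentiable ℝ P)
    (hQd : Differentiable ℝ Q)
    (hRd : Differentiable ℝ R)
    (hP0 : ∀ u : ℝ, P u ≠ 0)
    (hτd : Differentiable ℝ τ)
    (hφu : ∀ (n : ℤ) (t : ℝ), ContDiff ℝ 2 (fun v => φ n t v))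
    (hφt : ∀ (n : ℤ) (u : ℝ), Differentiable ℝ (fun s => φ n s u))
    (hdet : DeterminingEq P Q R τ φ) :
    ∀ (n : ℤ) (t x y : ℝ),
      deriv (deriv (fun v => φ (n + 1) t v)) x
        = deriv (deriv (fun v => φ (n - 1) t v)) y := by
  intro n t x y
  obtain ⟨heq, hmem⟩ := second_derivative_relation_general hdet (fun h => hP0 0 h.1) n t
  exact heq ▸ polynomialFunctionsLE.deriv_deriv_eq hmem x y
end

section
/- Let P, Q, R : ℝ → ℝ be differentiable, let τ₁, τ₀, a₁, a₂, b₁, b₂, c₁, c₂ be real constants, set τ(t) = τ₁ t + τ₀ and φₙ(t,u) = (a₁ + (−1)ⁿ a₂) + (b₁ + (−1)ⁿ b₂)u + (c₁ + (−1)ⁿ c₂)u². Then the determining equation holds for all n ∈ ℤ and all t, u, x, z ∈ ℝ if and only if the six equations (E1)–(E6) hold for all u ∈ ℝ. -/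
lemma quadratic_mul_quadratic_sub_swap {S : Type*} [CommRing S] (a b c p q r x z : S) :
    (a + b * z + c * z ^ 2) * (p * x ^ 2 + q * x + r)
        - (a + b * x + c * x ^ 2) * (p * z ^ 2 + q * z + r)
      = (x - z) * ((a * p - c * r) * (x + z) + (b * p - c * q) * (x * z) + (a * q - b * r)) := by
  ring

lemma forall_sub_mul_symmetric_eq_zero_iff {S : Type*} [CommRing S] [NoZeroDivisors S]
    [NeZero (2 : S)] {p q r : S} :
    (∀ x z : S, (x - z) * (p * (x + z) + q * (x * z) + r) = 0) ↔ p = 0 ∧ q = 0 ∧ r = 0 := by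
  refine ⟨fun h => ?_, by rintro ⟨rfl, rfl, rfl⟩; simp⟩
  have hp : p = 0 := eq_zero_of_ne_zero_of_mul_left_eq_zero two_ne_zero
    (by linear_combination h 1 0 + h (-1) 0)
  have hr : r = 0 := by linear_combination h 1 0 - hp
  have hq : q = 0 := eq_zero_of_ne_zero_of_mul_left_eq_zero two_ne_zero
    (by linear_combination 2 * hr - h 1 (-1))
  exact ⟨hp, hq, hr⟩

lemma forall_eq_zero_iff_of_eq_add_neg_one_zpow_mul {K : Type*} [Field K] [NeZero (2 : K)]
    {f : ℤ → K} {a b : K} (hf : ∀ n, f n = a + (-1) ^ n * b) :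
    (∀ n, f n = 0) ↔ a = 0 ∧ b = 0 := by
  refine ⟨fun h => ?_, by rintro ⟨rfl, rfl⟩ n; simp [hf]⟩
  have h_even : a + b = 0 := by simpa [hf] using h 0
  have h_odd : a - b = 0 := by simpa [hf, sub_eq_add_neg] using h 1
  have ha : a = 0 := eq_zero_of_ne_zero_of_mul_left_eq_zero two_ne_zero
    (by linear_combination h_even + h_odd)
  exact ⟨ha, by linear_combination h_even - ha⟩

lemma periodic_add_neg_one_zpow_mul {K : Type*} [DivisionRing K] (a b : K) :
    Function.Periodic (fun n : ℤ => a + (-1) ^ n * b) 2 := fun n => by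
  simp [zpow_add₀]

lemma deriv_quadratic {𝕜 : Type*} [NontriviallyNormedField 𝕜] (a b c u : 𝕜) :
    deriv (fun v => a + b * v + c * v ^ 2) u = b + 2 * c * u := by
  have h : HasDerivAt (fun v => a + b * v + c * v ^ 2) (b * 1 + c * (2 * u)) u := by
    simpa using (((hasDerivAt_id u).const_mul b).const_add a).fun_add
      ((hasDerivAt_pow 2 u).const_mul c)
  rw [h.deriv]
  ring

lemma determiningEq_quadratic_iff {P Q R τ : ℝ → ℝ} {a b c : ℤ → ℝ}
    (ha : Function.Periodic a 2) (hb : Function.Periodic b 2) (hc : Function.Periodic c 2) :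
    DeterminingEq P Q R τ (fun n _ u => a n + b n * u + c n * u ^ 2) ↔
      ∀ (n : ℤ) (t u : ℝ),
        (b n + 2 * c n * u - deriv τ t) * Q u - (a n + b n * u + c n * u ^ 2) * deriv Q u
            - (a (n + 1) * P u - c (n + 1) * R u) = 0 ∧
        (b n + 2 * c n * u - deriv τ t) * P u - (a n + b n * u + c n * u ^ 2) * deriv P u
            - (b (n + 1) * P u - c (n + 1) * (2 * Q u)) = 0 ∧
        (b n + 2 * c n * u - deriv τ t) * R u - (a n + b n * u + c n * u ^ 2) * deriv R u
            - (a (n + 1) * (2 * Q u) - b (n + 1) * R u) = 0 := by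
  refine forall₃_congr fun n t u => ?_
  have pred_eq_succ {f : ℤ → ℝ} (hf : Function.Periodic f 2) : f (n - 1) = f (n + 1) := by
    rw [← hf (n - 1), show n - 1 + 2 = n + 1 by ring]
  rw [← forall_sub_mul_symmetric_eq_zero_iff]
  refine forall₂_congr fun x z => ?_
  beta_reduce
  rw [pred_eq_succ ha, pred_eq_succ hb, pred_eq_succ hc, quadratic_mul_quadratic_sub_swap,
    deriv_quadratic, deriv_const, ← sub_eq_zero]
  congr! 1
  ring

/-- With `τ(t) = τ₁ t + τ₀` and
`φₙ(t,u) = (a₁ + (−1)ⁿ a₂) + (b₁ + (−1)ⁿ b₂)u + (c₁ + (−1)ⁿ c₂)u²`,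
the determining equation holds iff the six equations (E1)–(E6) hold
for all `u ∈ ℝ`. -/
theorem determining_eq_iff_six_equations
    (P Q R : ℝ → ℝ)
    (hPd : Differentiable ℝ P)
    (hQd : Differentiable ℝ Q)
    (hRd : Differentiable ℝ R)
    (τ₁ τ₀ a₁ a₂ b₁ b₂ c₁ c₂ : ℝ) :
    DeterminingEq P Q R (fun t => τ₁ * t + τ₀)
      (fun (n : ℤ) (_t u : ℝ) =>
        (a₁ + (-1 : ℝ) ^ n * a₂) + (b₁ + (-1 : ℝ) ^ n * b₂) * u
          + (c₁ + (-1 : ℝ) ^ n * c₂) * u ^ 2)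
    ↔ ∀ u : ℝ,
      (-a₁ * P u + c₁ * R u - (a₁ + b₁ * u + c₁ * u ^ 2) * deriv Q u
          + (b₁ + 2 * c₁ * u - τ₁) * Q u = 0) ∧
      (a₂ * P u - c₂ * R u - (a₂ + b₂ * u + c₂ * u ^ 2) * deriv Q u
          + (b₂ + 2 * c₂ * u) * Q u = 0) ∧
      (2 * c₁ * Q u - (a₁ + b₁ * u + c₁ * u ^ 2) * deriv P u
          + (2 * c₁ * u - τ₁) * P u = 0) ∧
      (-2 * c₂ * Q u - (a₂ + b₂ * u + c₂ * u ^ 2) * deriv P u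
          + (2 * b₂ + 2 * c₂ * u) * P u = 0) ∧
      (-2 * a₁ * Q u - (a₁ + b₁ * u + c₁ * u ^ 2) * deriv R u
          + (2 * b₁ + 2 * c₁ * u - τ₁) * R u = 0) ∧
      (2 * a₂ * Q u - (a₂ + b₂ * u + c₂ * u ^ 2) * deriv R u
          + 2 * c₂ * u * R u = 0) := by
  rw [determiningEq_quadratic_iff (periodic_add_neg_one_zpow_mul a₁ a₂)
    (periodic_add_neg_one_zpow_mul b₁ b₂) (periodic_add_neg_one_zpow_mul c₁ c₂)]
  have deriv_τ (t : ℝ) : deriv (fun t => τ₁ * t + τ₀) t = τ₁ := by simp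
  have neg_one_zpow_succ (n : ℤ) : (-1 : ℝ) ^ (n + 1) = -(-1) ^ n := by simp [zpow_add_one₀]
  simp only [deriv_τ, neg_one_zpow_succ, forall_const]
  rw [forall_comm]
  refine forall_congr' fun u => ?_
  rw [forall_and, ← and_assoc]
  refine and_congr (forall_eq_zero_iff_of_eq_add_neg_one_zpow_mul fun n => by ring) ?_
  rw [forall_and, ← and_assoc]
  exact and_congr (forall_eq_zero_iff_of_eq_add_neg_one_zpow_mul fun n => by ring)
    (forall_eq_zero_iff_of_eq_add_neg_one_zpow_mul fun n => by ring)
end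

section
/- Let P, Q, R : ℝ → ℝ, let ξ₁, ξ₂, ξ₃, ξ₄, θ₁, θ₂ ∈ ℝ with ξ₁ξ₄ − ξ₂ξ₃ = ±1 and θ₁ ≠ 0, and set M(v) = (ξ₁v+ξ₂)/(ξ₃v+ξ₄). Suppose u* : ℤ → ℝ → ℝ is differentiable in t and for all n, t one has ξ₃u*ₙ(t) + ξ₄ ≠ 0 and u*ₙ₊₁(t) ≠ u*ₙ₋₁(t), and suppose the functions uₙ(t) := M(u*ₙ((t − θ₂)/θ₁)) satisfy u̇ₙ = [P(uₙ)uₙ₊₁uₙ₋₁ + Q(uₙ)(uₙ₊₁+uₙ₋₁) + R(uₙ)]/(uₙ₊₁−uₙ₋₁). Then u* satisfies u̇*ₙ = [P̃(u*ₙ)u*ₙ₊₁u*ₙ₋₁ + Q̃(u*ₙ)(u*ₙ₊₁+u*ₙ₋₁) + R̃(u*ₙ)]/(u*ₙ₊₁−u*ₙ₋₁), where P̃(v) = θ₁(ξ₃v+ξ₄)²[ξ₁²P(M(v)) + 2ξ₁ξ₃Q(M(v)) + ξ₃²R(M(v))], Q̃(v) = θ₁(ξ₃v+ξ₄)²[ξ₁ξ₂P(M(v))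 + (ξ₁ξ₄+ξ₂ξ₃)Q(M(v)) + ξ₃ξ₄R(M(v))], R̃(v) = θ₁(ξ₃v+ξ₄)²[ξ₂²P(M(v)) + 2ξ₂ξ₄Q(M(v)) + ξ₄²R(M(v))]. -/
/-!
The numerator of the equation is the polar form of the quadratic polynomial `p v² + 2 q v + r` with
`p, q, r = P(uₙ), Q(uₙ), R(uₙ)`. Let `M` have determinant `Δ`. Substituting `M x`, `M y` for the
two neighbours turns this form into that of the pulled-back quadratic, divided by
`(ξ₃ x + ξ₄) (ξ₃ y + ξ₄)`. The difference `M x - M y = Δ (x - y) / ((ξ₃ x + ξ₄) (ξ₃ y + ξ₄))` has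
the same denominator, which therefore cancels. The chain rule, with `M' v = Δ / (ξ₃ v + ξ₄)²` and
the factor `1 / θ₁` of the time change, then yields the factor `θ₁ (ξ₃ v + ξ₄)² / Δ²` of the new
coefficients.
-/

namespace KricheverNovikov

section Moebius

variable {K : Type*} [Field K]

/-- The right-hand side of the Krichever–Novikov equation as a function of the values `p`, `q`, `r`
of the coefficients at `uₙ` and of the neighbours `x = uₙ₊₁`, `y = uₙ₋₁`. It has the junk
value `0` at `x = y`. -/
def knVelocity (p q r x y : K) : K :=
  (p * (x * y) + q * (x + y) + r) / (x - y)

/-- The Möbius transformation with matrix `!![ξ₁, ξ₂; ξ₃, ξ₄]`, as a map of the affine line: it has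
the junk value `0` at its pole. -/
def moebius (ξ₁ ξ₂ ξ₃ ξ₄ v : K) : K :=
  (ξ₁ * v + ξ₂) / (ξ₃ * v + ξ₄)

/-- The coefficient `P̃` of the transformed equation; `c` is the constant factor contributed by the
time change. -/
def transformedP (P Q R : K → K) (ξ₁ ξ₂ ξ₃ ξ₄ c v : K) : K :=
  c * (ξ₃ * v + ξ₄) ^ 2
    * (ξ₁ ^ 2 * P (moebius ξ₁ ξ₂ ξ₃ ξ₄ v) + 2 * ξ₁ * ξ₃ * Q (moebius ξ₁ ξ₂ ξ₃ ξ₄ v)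
      + ξ₃ ^ 2 * R (moebius ξ₁ ξ₂ ξ₃ ξ₄ v))

/-- The coefficient `Q̃` of the transformed equation; `c` is as in `transformedP`. -/
def transformedQ (P Q R : K → K) (ξ₁ ξ₂ ξ₃ ξ₄ c v : K) : K :=
  c * (ξ₃ * v + ξ₄) ^ 2
    * (ξ₁ * ξ₂ * P (moebius ξ₁ ξ₂ ξ₃ ξ₄ v)
      + (ξ₁ * ξ₄ + ξ₂ * ξ₃) * Q (moebius ξ₁ ξ₂ ξ₃ ξ₄ v)
      + ξ₃ * ξ₄ * R (moebius ξ₁ ξ₂ ξ₃ ξ₄ v))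

/-- The coefficient `R̃` of the transformed equation; `c` is as in `transformedP`. -/
def transformedR (P Q R : K → K) (ξ₁ ξ₂ ξ₃ ξ₄ c v : K) : K :=
  c * (ξ₃ * v + ξ₄) ^ 2
    * (ξ₂ ^ 2 * P (moebius ξ₁ ξ₂ ξ₃ ξ₄ v) + 2 * ξ₂ * ξ₄ * Q (moebius ξ₁ ξ₂ ξ₃ ξ₄ v)
      + ξ₄ ^ 2 * R (moebius ξ₁ ξ₂ ξ₃ ξ₄ v))

lemma knVelocity_mul (k p q r x y : K) :
    knVelocity (k * p) (k * q) (k * r) x y = k * knVelocity p q r x y := by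
  unfold knVelocity
  ring

variable {ξ₁ ξ₂ ξ₃ ξ₄ x y : K}

lemma moebius_sub_moebius (hx : ξ₃ * x + ξ₄ ≠ 0) (hy : ξ₃ * y + ξ₄ ≠ 0) :
    moebius ξ₁ ξ₂ ξ₃ ξ₄ x - moebius ξ₁ ξ₂ ξ₃ ξ₄ y =
      (ξ₁ * ξ₄ - ξ₂ * ξ₃) * (x - y) / ((ξ₃ * x + ξ₄) * (ξ₃ * y + ξ₄)) := by
  rw [moebius, moebius, div_sub_div _ _ hx hy]
  ring

lemma moebius_eq_moebius_iff (hdet : ξ₁ * ξ₄ - ξ₂ * ξ₃ ≠ 0)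
    (hx : ξ₃ * x + ξ₄ ≠ 0) (hy : ξ₃ * y + ξ₄ ≠ 0) :
    moebius ξ₁ ξ₂ ξ₃ ξ₄ x = moebius ξ₁ ξ₂ ξ₃ ξ₄ y ↔ x = y := by
  rw [← sub_eq_zero, moebius_sub_moebius hx hy]
  simp [hdet, hx, hy, sub_eq_zero]

lemma polar_moebius (p q r : K) (hx : ξ₃ * x + ξ₄ ≠ 0) (hy : ξ₃ * y + ξ₄ ≠ 0) :
    p * (moebius ξ₁ ξ₂ ξ₃ ξ₄ x * moebius ξ₁ ξ₂ ξ₃ ξ₄ y)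
        + q * (moebius ξ₁ ξ₂ ξ₃ ξ₄ x + moebius ξ₁ ξ₂ ξ₃ ξ₄ y) + r =
      ((ξ₁ ^ 2 * p + 2 * ξ₁ * ξ₃ * q + ξ₃ ^ 2 * r) * (x * y)
        + (ξ₁ * ξ₂ * p + (ξ₁ * ξ₄ + ξ₂ * ξ₃) * q + ξ₃ * ξ₄ * r) * (x + y)
        + (ξ₂ ^ 2 * p + 2 * ξ₂ * ξ₄ * q + ξ₄ ^ 2 * r))
      / ((ξ₃ * x + ξ₄) * (ξ₃ * y + ξ₄)) := by
  have hMx : moebius ξ₁ ξ₂ ξ₃ ξ₄ x * (ξ₃ * x + ξ₄) = ξ₁ * x + ξ₂ := div_mul_cancel₀ _ hx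
  have hMy : moebius ξ₁ ξ₂ ξ₃ ξ₄ y * (ξ₃ * y + ξ₄) = ξ₁ * y + ξ₂ := div_mul_cancel₀ _ hy
  rw [eq_div_iff (mul_ne_zero hx hy)]
  linear_combination
    (p * moebius ξ₁ ξ₂ ξ₃ ξ₄ y + q) * (ξ₃ * y + ξ₄) * hMx
      + (p * (ξ₁ * x + ξ₂) + q * (ξ₃ * x + ξ₄)) * hMy

lemma knVelocity_moebius (p q r : K) (hx : ξ₃ * x + ξ₄ ≠ 0) (hy : ξ₃ * y + ξ₄ ≠ 0) :
    knVelocity p q r (moebius ξ₁ ξ₂ ξ₃ ξ₄ x) (moebius ξ₁ ξ₂ ξ₃ ξ₄ y) =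
      knVelocity (ξ₁ ^ 2 * p + 2 * ξ₁ * ξ₃ * q + ξ₃ ^ 2 * r)
        (ξ₁ * ξ₂ * p + (ξ₁ * ξ₄ + ξ₂ * ξ₃) * q + ξ₃ * ξ₄ * r)
        (ξ₂ ^ 2 * p + 2 * ξ₂ * ξ₄ * q + ξ₄ ^ 2 * r) x y / (ξ₁ * ξ₄ - ξ₂ * ξ₃) := by
  rw [knVelocity, polar_moebius p q r hx hy, moebius_sub_moebius hx hy,
    div_div_div_cancel_right₀ (mul_ne_zero hx hy), knVelocity, div_div, mul_comm (x - y)]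

lemma knVelocity_transformed (P Q R : K → K) (c v : K) (hdet : ξ₁ * ξ₄ - ξ₂ * ξ₃ ≠ 0)
    (hx : ξ₃ * x + ξ₄ ≠ 0) (hy : ξ₃ * y + ξ₄ ≠ 0) :
    knVelocity (transformedP P Q R ξ₁ ξ₂ ξ₃ ξ₄ c v) (transformedQ P Q R ξ₁ ξ₂ ξ₃ ξ₄ c v)
        (transformedR P Q R ξ₁ ξ₂ ξ₃ ξ₄ c v) x y =
      c * (ξ₃ * v + ξ₄) ^ 2 * ((ξ₁ * ξ₄ - ξ₂ * ξ₃)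
        * knVelocity (P (moebius ξ₁ ξ₂ ξ₃ ξ₄ v)) (Q (moebius ξ₁ ξ₂ ξ₃ ξ₄ v))
          (R (moebius ξ₁ ξ₂ ξ₃ ξ₄ v)) (moebius ξ₁ ξ₂ ξ₃ ξ₄ x) (moebius ξ₁ ξ₂ ξ₃ ξ₄ y)) := by
  rw [transformedP, transformedQ, transformedR, knVelocity_mul, knVelocity_moebius _ _ _ hx hy,
    mul_div_cancel₀ _ hdet]

end Moebius

section Solution

variable {𝕜 : Type*} [NontriviallyNormedField 𝕜] {ξ₁ ξ₂ ξ₃ ξ₄ : 𝕜}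

/-- `u` satisfies the generalized Krichever–Novikov equation with coefficients `P`, `Q`, `R`. The
condition `uₙ₊₁ ≠ uₙ₋₁` is part of the notion, so that the quotient never takes a junk value;
differentiability, on which the meaning of `deriv` depends, is not. -/
def IsKNSolution (P Q R : 𝕜 → 𝕜) (u : ℤ → 𝕜 → 𝕜) : Prop :=
  ∀ n t, u (n + 1) t ≠ u (n - 1) t ∧
    deriv (u n) t =
      knVelocity (P (u n t)) (Q (u n t)) (R (u n t)) (u (n + 1) t) (u (n - 1) t)

lemma hasDerivAt_moebius {v : 𝕜} (hv : ξ₃ * v + ξ₄ ≠ 0) :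
    HasDerivAt (moebius ξ₁ ξ₂ ξ₃ ξ₄) ((ξ₁ * ξ₄ - ξ₂ * ξ₃) / (ξ₃ * v + ξ₄) ^ 2) v := by
  have hnum : HasDerivAt (fun w => ξ₁ * w + ξ₂) ξ₁ v := by
    simpa using ((hasDerivAt_id v).const_mul ξ₁).add_const ξ₂
  have hden : HasDerivAt (fun w => ξ₃ * w + ξ₄) ξ₃ v := by
    simpa using ((hasDerivAt_id v).const_mul ξ₃).add_const ξ₄
  exact (hnum.fun_div hden hv).congr_deriv (by ring)

lemma deriv_moebius_comp_affine {w : 𝕜 → 𝕜} {θ₁ θ₂ t : 𝕜}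
    (hw : DifferentiableAt 𝕜 w ((t - θ₂) / θ₁)) (hden : ξ₃ * w ((t - θ₂) / θ₁) + ξ₄ ≠ 0) :
    deriv (fun s => moebius ξ₁ ξ₂ ξ₃ ξ₄ (w ((s - θ₂) / θ₁))) t =
      (ξ₁ * ξ₄ - ξ₂ * ξ₃) / (ξ₃ * w ((t - θ₂) / θ₁) + ξ₄) ^ 2
        * (deriv w ((t - θ₂) / θ₁) / θ₁) := by
  have htime : HasDerivAt (fun s => (s - θ₂) / θ₁) (1 / θ₁) t :=
    ((hasDerivAt_id t).sub_const θ₂).div_const θ₁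
  have hinner := hw.hasDerivAt.comp t htime
  rw [mul_one_div] at hinner
  exact ((hasDerivAt_moebius hden).comp t hinner).deriv

lemma deriv_moebius_comp_affine_eq_knVelocity_iff (P Q R : 𝕜 → 𝕜) {w : 𝕜 → 𝕜}
    {θ₁ θ₂ t x y : 𝕜} (hdet : ξ₁ * ξ₄ - ξ₂ * ξ₃ ≠ 0) (hθ₁ : θ₁ ≠ 0)
    (hw : DifferentiableAt 𝕜 w ((t - θ₂) / θ₁)) (hden : ξ₃ * w ((t - θ₂) / θ₁) + ξ₄ ≠ 0)
    (hx : ξ₃ * x + ξ₄ ≠ 0) (hy : ξ₃ * y + ξ₄ ≠ 0) :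
    deriv (fun s => moebius ξ₁ ξ₂ ξ₃ ξ₄ (w ((s - θ₂) / θ₁))) t =
        knVelocity (P (moebius ξ₁ ξ₂ ξ₃ ξ₄ (w ((t - θ₂) / θ₁))))
          (Q (moebius ξ₁ ξ₂ ξ₃ ξ₄ (w ((t - θ₂) / θ₁))))
          (R (moebius ξ₁ ξ₂ ξ₃ ξ₄ (w ((t - θ₂) / θ₁))))
          (moebius ξ₁ ξ₂ ξ₃ ξ₄ x) (moebius ξ₁ ξ₂ ξ₃ ξ₄ y) ↔
      deriv w ((t - θ₂) / θ₁) =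
        knVelocity
          (transformedP P Q R ξ₁ ξ₂ ξ₃ ξ₄ (θ₁ / (ξ₁ * ξ₄ - ξ₂ * ξ₃) ^ 2) (w ((t - θ₂) / θ₁)))
          (transformedQ P Q R ξ₁ ξ₂ ξ₃ ξ₄ (θ₁ / (ξ₁ * ξ₄ - ξ₂ * ξ₃) ^ 2) (w ((t - θ₂) / θ₁)))
          (transformedR P Q R ξ₁ ξ₂ ξ₃ ξ₄ (θ₁ / (ξ₁ * ξ₄ - ξ₂ * ξ₃) ^ 2) (w ((t - θ₂) / θ₁)))
          x y := by
  rw [deriv_moebius_comp_affine hw hden, knVelocity_transformed P Q R _ _ hdet hx hy]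
  generalize ξ₁ * ξ₄ - ξ₂ * ξ₃ = Δ at hdet ⊢
  field_simp

end Solution

end KricheverNovikov

open KricheverNovikov

theorem allowed_transformation_general {𝕜 : Type*} [NontriviallyNormedField 𝕜] (P Q R : 𝕜 → 𝕜)
    {ξ₁ ξ₂ ξ₃ ξ₄ θ₁ : 𝕜} (θ₂ : 𝕜) (hdet : ξ₁ * ξ₄ - ξ₂ * ξ₃ ≠ 0) (hθ₁ : θ₁ ≠ 0)
    {v : ℤ → 𝕜 → 𝕜} (hdiff : ∀ n, Differentiable 𝕜 (v n)) (hden : ∀ n t, ξ₃ * v n t + ξ₄ ≠ 0) :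
    IsKNSolution P Q R (fun n t => moebius ξ₁ ξ₂ ξ₃ ξ₄ (v n ((t - θ₂) / θ₁))) ↔
      IsKNSolution (transformedP P Q R ξ₁ ξ₂ ξ₃ ξ₄ (θ₁ / (ξ₁ * ξ₄ - ξ₂ * ξ₃) ^ 2))
        (transformedQ P Q R ξ₁ ξ₂ ξ₃ ξ₄ (θ₁ / (ξ₁ * ξ₄ - ξ₂ * ξ₃) ^ 2))
        (transformedR P Q R ξ₁ ξ₂ ξ₃ ξ₄ (θ₁ / (ξ₁ * ξ₄ - ξ₂ * ξ₃) ^ 2)) v := by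
  have htime : Function.Surjective fun t => (t - θ₂) / θ₁ :=
    fun s => ⟨s * θ₁ + θ₂, by simp [hθ₁]⟩
  refine forall_congr' fun n => Iff.trans (forall_congr' fun t => ?_) htime.forall.symm
  exact and_congr (moebius_eq_moebius_iff hdet (hden _ _) (hden _ _)).not
    (deriv_moebius_comp_affine_eq_knVelocity_iff P Q R hdet hθ₁ (hdiff n _) (hden n _)
      (hden _ _) (hden _ _))

/-- Allowed transformations: a Möbius transformation of `uₙ` combined with an
affine transformation of `t` maps a solution of the generalized
Krichever–Novikov differential–difference equation with coefficients
`P, Q, R` to a solution of an equation of the same form with the transformed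
coefficients `P̃, Q̃, R̃`. -/
theorem allowed_transformation
    (P Q R : ℝ → ℝ) (ξ₁ ξ₂ ξ₃ ξ₄ θ₁ θ₂ : ℝ)
    (hdet : ξ₁ * ξ₄ - ξ₂ * ξ₃ = 1 ∨ ξ₁ * ξ₄ - ξ₂ * ξ₃ = -1)
    (hθ₁ : θ₁ ≠ 0)
    (M : ℝ → ℝ) (hM : M = fun v => (ξ₁ * v + ξ₂) / (ξ₃ * v + ξ₄))
    (ustar : ℤ → ℝ → ℝ)
    (hdiff : ∀ n : ℤ, Differentiable ℝ (ustar n))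
    (hden : ∀ (n : ℤ) (t : ℝ), ξ₃ * ustar n t + ξ₄ ≠ 0)
    (hne : ∀ (n : ℤ) (t : ℝ), ustar (n + 1) t ≠ ustar (n - 1) t)
    (u : ℤ → ℝ → ℝ) (hu : u = fun n t => M (ustar n ((t - θ₂) / θ₁)))
    (heq : ∀ (n : ℤ) (t : ℝ),
      deriv (u n) t =
        (P (u n t) * (u (n + 1) t * u (n - 1) t)
          + Q (u n t) * (u (n + 1) t + u (n - 1) t) + R (u n t))
        / (u (n + 1) t - u (n - 1) t)) :
    ∀ (n : ℤ) (t : ℝ),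
      deriv (ustar n) t =
        ((θ₁ * (ξ₃ * ustar n t + ξ₄) ^ 2
            * (ξ₁ ^ 2 * P (M (ustar n t)) + 2 * ξ₁ * ξ₃ * Q (M (ustar n t))
                + ξ₃ ^ 2 * R (M (ustar n t))))
            * (ustar (n + 1) t * ustar (n - 1) t)
          + (θ₁ * (ξ₃ * ustar n t + ξ₄) ^ 2
            * (ξ₁ * ξ₂ * P (M (ustar n t)) + (ξ₁ * ξ₄ + ξ₂ * ξ₃) * Q (M (ustar n t))
                + ξ₃ * ξ₄ * R (M (ustar n t))))
            * (ustar (n + 1) t + ustar (n - 1) t)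
          + θ₁ * (ξ₃ * ustar n t + ξ₄) ^ 2
            * (ξ₂ ^ 2 * P (M (ustar n t)) + 2 * ξ₂ * ξ₄ * Q (M (ustar n t))
                + ξ₄ ^ 2 * R (M (ustar n t))))
        / (ustar (n + 1) t - ustar (n - 1) t) := by
  subst hM hu
  have hdet_sq : (ξ₁ * ξ₄ - ξ₂ * ξ₃) ^ 2 = 1 := sq_eq_one_iff.2 hdet
  have hdet_ne : ξ₁ * ξ₄ - ξ₂ * ξ₃ ≠ 0 := fun h => by simp [h] at hdet_sq
  have hsol := (allowed_transformation_general P Q R θ₂ hdet_ne hθ₁ hdiff hden).1 fun n t =>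
    ⟨(moebius_eq_moebius_iff hdet_ne (hden _ _) (hden _ _)).not.2 (hne _ _), heq n t⟩
  rw [hdet_sq, div_one] at hsol
  exact fun n t => (hsol n t).2
end

section
/- Let ρ ≠ 0 and A ∈ ℝ, and define P(u) = A e^{ρ·arctan u}(1 + u²), Q(u) = 0, R(u) = A e^{ρ·arctan u}(1 + u²). Then the six determining equations (E1)–(E6) hold for all u ∈ ℝ with the parameter values τ₁ = −ρ, a₁ = 1, b₁ = 0, c₁ = 1, a₂ = b₂ = c₂ = 0. -/
/-!
For these parameters (E1), (E2), (E4) and (E6) are immediate, while (E3) and (E5) are one and the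
same equation `q f' - q' f = ρ f` with `q u = 1 + u²` and `f = P = R`; that is, the vector field
`f ∂ᵤ` satisfies `[q ∂ᵤ, f ∂ᵤ] = ρ f ∂ᵤ`. By the Leibniz rule this holds for `f = E q` as soon as
`q E' = ρ E`, and `E = A exp (ρ arctan)` has this property because `arctan` straightens the flow
of `q ∂ᵤ`, that is, `q arctan' = 1`.
-/

theorem mul_deriv_mul_self_of_mul_deriv_eq {𝕜 : Type*} [NontriviallyNormedField 𝕜]
    {E q : 𝕜 → 𝕜} {E' q' ρ u : 𝕜} (hE : HasDerivAt E E' u) (hq : HasDerivAt q q' u)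
    (hqE : q u * E' = ρ * E u) :
    q u * deriv (fun x => E x * q x) u = (q' + ρ) * (E u * q u) := by
  rw [(hE.fun_mul hq).deriv]
  linear_combination q u * hqE

theorem hasDerivAt_const_mul_exp_mul_arctan (A ρ u : ℝ) :
    HasDerivAt (fun x => A * Real.exp (ρ * Real.arctan x))
      (A * (Real.exp (ρ * Real.arctan u) * (ρ * (1 / (1 + u ^ 2))))) u :=
  ((Real.hasDerivAt_arctan u).const_mul ρ).exp.const_mul A

theorem one_add_sq_mul_deriv_exp_arctan_mul_one_add_sq (A ρ u : ℝ) :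
    (1 + u ^ 2) * deriv (fun x => A * Real.exp (ρ * Real.arctan x) * (1 + x ^ 2)) u =
      (2 * u + ρ) * (A * Real.exp (ρ * Real.arctan u) * (1 + u ^ 2)) := by
  have hq : HasDerivAt (fun x : ℝ => 1 + x ^ 2) (2 * u) u := by
    simpa using (hasDerivAt_pow 2 u).const_add 1
  refine mul_deriv_mul_self_of_mul_deriv_eq (hasDerivAt_const_mul_exp_mul_arctan A ρ u) hq ?_
  field_simp

/-- The functions `P(u) = A e^{ρ arctan u}(1 + u²)`, `Q = 0`,
`R(u) = A e^{ρ arctan u}(1 + u²)` satisfy the six determining equations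
(E1)–(E6) with `τ₁ = −ρ`, `a₁ = 1`, `b₁ = 0`, `c₁ = 1`, `a₂ = b₂ = c₂ = 0`. -/
theorem six_equations_arctan_case
    (ρ A : ℝ) (hρ : ρ ≠ 0)
    (P Q R : ℝ → ℝ)
    (hP : ∀ u : ℝ, P u = A * Real.exp (ρ * Real.arctan u) * (1 + u ^ 2))
    (hQ : ∀ u : ℝ, Q u = 0)
    (hR : ∀ u : ℝ, R u = A * Real.exp (ρ * Real.arctan u) * (1 + u ^ 2))
    (τ₁ a₁ a₂ b₁ b₂ c₁ c₂ : ℝ)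
    (hτ₁ : τ₁ = -ρ) (ha₁ : a₁ = 1) (hb₁ : b₁ = 0) (hc₁ : c₁ = 1)
    (ha₂ : a₂ = 0) (hb₂ : b₂ = 0) (hc₂ : c₂ = 0) :
    ∀ u : ℝ,
      (-a₁ * P u + c₁ * R u - (a₁ + b₁ * u + c₁ * u ^ 2) * deriv Q u
          + (b₁ + 2 * c₁ * u - τ₁) * Q u = 0) ∧
      (a₂ * P u - c₂ * R u - (a₂ + b₂ * u + c₂ * u ^ 2) * deriv Q u
          + (b₂ + 2 * c₂ * u) * Q u = 0) ∧
      (2 * c₁ * Q u - (a₁ + b₁ * u + c₁ * u ^ 2) * deriv P u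
          + (2 * c₁ * u - τ₁) * P u = 0) ∧
      (-2 * c₂ * Q u - (a₂ + b₂ * u + c₂ * u ^ 2) * deriv P u
          + (2 * b₂ + 2 * c₂ * u) * P u = 0) ∧
      (-2 * a₁ * Q u - (a₁ + b₁ * u + c₁ * u ^ 2) * deriv R u
          + (2 * b₁ + 2 * c₁ * u - τ₁) * R u = 0) ∧
      (2 * a₂ * Q u - (a₂ + b₂ * u + c₂ * u ^ 2) * deriv R u
          + 2 * c₂ * u * R u = 0) := by
  obtain rfl : R = P := funext fun u => (hR u).trans (hP u).symm
  obtain rfl : Q = fun _ => 0 := funext hQ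
  subst hτ₁ ha₁ hb₁ hc₁ ha₂ hb₂ hc₂
  intro u
  have h_ode : (1 + u ^ 2) * deriv R u = (2 * u + ρ) * R u := by
    rw [funext hR]
    exact one_add_sq_mul_deriv_exp_arctan_mul_one_add_sq A ρ u
  rw [deriv_const]
  refine ⟨?E1, ?E2, ?E3, ?E4, ?E5, ?E6⟩
  case E3 | E5 => linear_combination -h_ode
  all_goals ring
end

section
/- Let ρ ≠ 0 and A, B, C ∈ ℝ, and on the interval (−1, 1) define W(u) = ((1+u)/(1−u))^ρ (real power), P(u) = W(u)(A + Bu + Cu²), Q(u) = −(1/2)W(u)(Bu² + (2A+2C)u + B), R(u) = W(u)(C + Bu + Au²). Then the six determining equations (E1)–(E6) hold for all u ∈ (−1, 1) with the parameter values τ₁ = 2ρ, a₁ = −1, b₁ = 0, c₁ = 1, a₂ = b₂ = c₂ = 0. -/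
/-!
With `a₂ = b₂ = c₂ = 0` the equations (E2), (E4), (E6) are void. In the other three, `τ₁` only
enters through the operator `ξ d/du + τ₁`, where `ξ = a₁ + b₁ u + c₁ u²`. A factor `W` with
`ξ W' = -τ W` conjugates `ξ d/du + τ` to `ξ d/du`, so multiplying a solution by `W` raises its `τ₁`
by `τ`. For `ξ = u² - 1` such a factor is `((1 + u) / (1 - u)) ^ (τ / 2)`, and for `τ₁ = 0` the
palindromic quadratic `Q` and the mutually reversed quadratics `P`, `R` solve the system by a
polynomial identity.
-/

open Filter Topology

section NontriviallyNormedField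

variable {𝕜 : Type*} [NontriviallyNormedField 𝕜] {σ τ a b c u : 𝕜}

/-- The determining equations (E1), (E3), (E5) at the point `u`, for the constants `τ₁ = τ`,
`a₁ = a`, `b₁ = b`, `c₁ = c`. Differentiability at `u` is part of the notion, so that `deriv` is
never a junk value. -/
structure IsDeterminingTriple (τ a b c : 𝕜) (P Q R : 𝕜 → 𝕜) (u : 𝕜) : Prop where
  differentiableAt_P : DifferentiableAt 𝕜 P u
  differentiableAt_Q : DifferentiableAt 𝕜 Q u
  differentiableAt_R : DifferentiableAt 𝕜 R u
  eq_Q : -a * P u + c * R u - (a + b * u + c * u ^ 2) * deriv Q u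
    + (b + 2 * c * u - τ) * Q u = 0
  eq_P : 2 * c * Q u - (a + b * u + c * u ^ 2) * deriv P u + (2 * c * u - τ) * P u = 0
  eq_R : -2 * a * Q u - (a + b * u + c * u ^ 2) * deriv R u
    + (2 * b + 2 * c * u - τ) * R u = 0

namespace IsDeterminingTriple

variable {P Q R P' Q' R' : 𝕜 → 𝕜}

theorem congr_of_eventuallyEq (h : IsDeterminingTriple τ a b c P Q R u)
    (hP : P' =ᶠ[𝓝 u] P) (hQ : Q' =ᶠ[𝓝 u] Q) (hR : R' =ᶠ[𝓝 u] R) :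
    IsDeterminingTriple τ a b c P' Q' R' u where
  differentiableAt_P := h.differentiableAt_P.congr_of_eventuallyEq hP
  differentiableAt_Q := h.differentiableAt_Q.congr_of_eventuallyEq hQ
  differentiableAt_R := h.differentiableAt_R.congr_of_eventuallyEq hR
  eq_Q := by rw [hP.eq_of_nhds, hQ.eq_of_nhds, hR.eq_of_nhds, hQ.deriv_eq, h.eq_Q]
  eq_P := by rw [hP.eq_of_nhds, hQ.eq_of_nhds, hP.deriv_eq, h.eq_P]
  eq_R := by rw [hQ.eq_of_nhds, hR.eq_of_nhds, hR.deriv_eq, h.eq_R]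

theorem weight_mul {W : 𝕜 → 𝕜} {W' : 𝕜} (h : IsDeterminingTriple σ a b c P Q R u)
    (hW : HasDerivAt W W' u) (hξ : (a + b * u + c * u ^ 2) * W' = -τ * W u) :
    IsDeterminingTriple (σ + τ) a b c (fun x ↦ W x * P x) (fun x ↦ W x * Q x)
      (fun x ↦ W x * R x) u where
  differentiableAt_P := hW.differentiableAt.fun_mul h.differentiableAt_P
  differentiableAt_Q := hW.differentiableAt.fun_mul h.differentiableAt_Q
  differentiableAt_R := hW.differentiableAt.fun_mul h.differentiableAt_R
  eq_Q := by
    rw [(hW.fun_mul h.differentiableAt_Q.hasDerivAt).deriv]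
    linear_combination W u * h.eq_Q - Q u * hξ
  eq_P := by
    rw [(hW.fun_mul h.differentiableAt_P.hasDerivAt).deriv]
    linear_combination W u * h.eq_P - P u * hξ
  eq_R := by
    rw [(hW.fun_mul h.differentiableAt_R.hasDerivAt).deriv]
    linear_combination W u * h.eq_R - R u * hξ

end IsDeterminingTriple

theorem hasDerivAt_quadratic (a b c u : 𝕜) :
    HasDerivAt (fun x ↦ a + b * x + c * x ^ 2) (b + 2 * c * u) u := by
  have h := (((hasDerivAt_id' u).const_mul b).const_add a).fun_add
    ((hasDerivAt_pow 2 u).const_mul c)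
  exact h.congr_deriv (by push_cast; ring)

theorem isDeterminingTriple_zero_quadratic (α β γ u : 𝕜) :
    IsDeterminingTriple 0 (-1) 0 1 (fun x ↦ α + 2 * β * x + γ * x ^ 2)
      (fun x ↦ -β + -(α + γ) * x + -β * x ^ 2) (fun x ↦ γ + 2 * β * x + α * x ^ 2) u where
  differentiableAt_P := (hasDerivAt_quadratic ..).differentiableAt
  differentiableAt_Q := (hasDerivAt_quadratic ..).differentiableAt
  differentiableAt_R := (hasDerivAt_quadratic ..).differentiableAt
  eq_Q := by rw [(hasDerivAt_quadratic ..).deriv]; ring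
  eq_P := by rw [(hasDerivAt_quadratic ..).deriv]; ring
  eq_R := by rw [(hasDerivAt_quadratic ..).deriv]; ring

theorem hasDerivAt_one_add_div_one_sub (hu : u ≠ 1) :
    HasDerivAt (fun x ↦ (1 + x) / (1 - x)) (2 / (1 - u) ^ 2) u := by
  have h := ((hasDerivAt_id' u).const_add 1).fun_div ((hasDerivAt_id' u).const_sub 1)
    (sub_ne_zero.mpr hu.symm)
  exact h.congr_deriv (by ring)

end NontriviallyNormedField

theorem hasDerivAt_one_add_div_one_sub_rpow (ρ : ℝ) {u : ℝ} (hu : u ∈ Set.Ioo (-1 : ℝ) 1) :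
    HasDerivAt (fun x ↦ ((1 + x) / (1 - x)) ^ ρ)
      (2 * ρ / (1 - u ^ 2) * ((1 + u) / (1 - u)) ^ ρ) u := by
  have h_add : 0 < 1 + u := by linarith [hu.1]
  have h_sub : 0 < 1 - u := by linarith [hu.2]
  have h_base : (1 + u) / (1 - u) ≠ 0 := (div_pos h_add h_sub).ne'
  refine ((hasDerivAt_one_add_div_one_sub hu.2.ne).rpow_const (Or.inl h_base)).congr_deriv ?_
  rw [Real.rpow_sub_one h_base, show 1 - u ^ 2 = (1 + u) * (1 - u) by ring]
  field_simp

/-- On `(−1, 1)`, with `W(u) = ((1+u)/(1−u))^ρ`, the functions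
`P = W·(A + Bu + Cu²)`, `Q = −(1/2)W·(Bu² + (2A+2C)u + B)`,
`R = W·(C + Bu + Au²)` satisfy the six determining equations (E1)–(E6) with
`τ₁ = 2ρ`, `a₁ = −1`, `b₁ = 0`, `c₁ = 1`, `a₂ = b₂ = c₂ = 0`. -/
theorem six_equations_pseudorotation_case
    (ρ A B C : ℝ) (hρ : ρ ≠ 0)
    (W P Q R : ℝ → ℝ)
    (hW : ∀ u ∈ Set.Ioo (-1 : ℝ) 1, W u = ((1 + u) / (1 - u)) ^ ρ)
    (hP : ∀ u ∈ Set.Ioo (-1 : ℝ) 1, P u = W u * (A + B * u + C * u ^ 2))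
    (hQ : ∀ u ∈ Set.Ioo (-1 : ℝ) 1,
      Q u = -(1 / 2) * W u * (B * u ^ 2 + (2 * A + 2 * C) * u + B))
    (hR : ∀ u ∈ Set.Ioo (-1 : ℝ) 1, R u = W u * (C + B * u + A * u ^ 2))
    (τ₁ a₁ a₂ b₁ b₂ c₁ c₂ : ℝ)
    (hτ₁ : τ₁ = 2 * ρ) (ha₁ : a₁ = -1) (hb₁ : b₁ = 0) (hc₁ : c₁ = 1)
    (ha₂ : a₂ = 0) (hb₂ : b₂ = 0) (hc₂ : c₂ = 0) :
    ∀ u ∈ Set.Ioo (-1 : ℝ) 1,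
      (-a₁ * P u + c₁ * R u - (a₁ + b₁ * u + c₁ * u ^ 2) * deriv Q u
          + (b₁ + 2 * c₁ * u - τ₁) * Q u = 0) ∧
      (a₂ * P u - c₂ * R u - (a₂ + b₂ * u + c₂ * u ^ 2) * deriv Q u
          + (b₂ + 2 * c₂ * u) * Q u = 0) ∧
      (2 * c₁ * Q u - (a₁ + b₁ * u + c₁ * u ^ 2) * deriv P u
          + (2 * c₁ * u - τ₁) * P u = 0) ∧
      (-2 * c₂ * Q u - (a₂ + b₂ * u + c₂ * u ^ 2) * deriv P u
          + (2 * b₂ + 2 * c₂ * u) * P u = 0) ∧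
      (-2 * a₁ * Q u - (a₁ + b₁ * u + c₁ * u ^ 2) * deriv R u
          + (2 * b₁ + 2 * c₁ * u - τ₁) * R u = 0) ∧
      (2 * a₂ * Q u - (a₂ + b₂ * u + c₂ * u ^ 2) * deriv R u
          + 2 * c₂ * u * R u = 0) := by
  intro u hu
  have eventuallyEq {f g : ℝ → ℝ} (h : Set.EqOn f g (Set.Ioo (-1) 1)) : f =ᶠ[𝓝 u] g :=
    h.eventuallyEq_of_mem (Ioo_mem_nhds hu.1 hu.2)
  have hW' : HasDerivAt W (2 * ρ / (1 - u ^ 2) * W u) u := by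
    rw [hW u hu]
    exact (hasDerivAt_one_add_div_one_sub_rpow ρ hu).congr_of_eventuallyEq (eventuallyEq hW)
  have hξ : (-1 + 0 * u + 1 * u ^ 2) * (2 * ρ / (1 - u ^ 2) * W u) = -(2 * ρ) * W u := by
    have : 1 - u ^ 2 ≠ 0 := by nlinarith [hu.1, hu.2]
    field_simp
    ring
  have triple : IsDeterminingTriple (0 + 2 * ρ) (-1) 0 1 P Q R u :=
    ((isDeterminingTriple_zero_quadratic A (B / 2) C u).weight_mul hW' hξ).congr_of_eventuallyEq
      (eventuallyEq fun x hx ↦ by rw [hP x hx]; ring)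
      (eventuallyEq fun x hx ↦ by rw [hQ x hx]; ring)
      (eventuallyEq fun x hx ↦ by rw [hR x hx]; ring)
  rw [zero_add] at triple
  subst hτ₁ ha₁ hb₁ hc₁ ha₂ hb₂ hc₂
  exact ⟨triple.eq_Q, by ring, triple.eq_P, by ring, triple.eq_R, by ring⟩
end

section
/- Let ρ ≠ 0 and A, B, C ∈ ℝ, and on the interval (0, ∞) define P(u) = e^{ρ/u}(A + Bu + Cu²), Q(u) = −(1/2)e^{ρ/u}(Bu² + 2Au), R(u) = e^{ρ/u}Au². Then the six determining equations (E1)–(E6) hold for all u > 0 with the parameter values τ₁ = ρ, a₁ = 0, b₁ = 0, c₁ = 1, a₂ = b₂ = c₂ = 0. -/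
/-!
The vector field `u² ∂ᵤ` multiplies `e^{ρ/u}` by `-ρ`, so the operator
`L F = (2u - ρ) F - u² F'` sends `e^{ρ/u} f` to `e^{ρ/u} (2u f - u² f')`. On quadratics `f` the
latter is the nilpotent part of the projective action, `x + y u + z u² ↦ 2x u + y u²`. With the
given parameters (E2), (E4) and (E6) are void, while (E1), (E3) and (E5) read `L Q = -R`,
`L P = -2Q` and `L R = 0`: the functions `P`, `-2Q`, `2R` form the orbit `P`, `L P`, `L² P`
of `L`, and `L³ P = 0`.
-/

open Topology

theorem hasDerivAt_quadratic_s10 {𝕜 : Type*} [NontriviallyNormedField 𝕜] (x y z u : 𝕜) :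
    HasDerivAt (fun v ↦ x + y * v + z * v ^ 2) (y + 2 * z * u) u := by
  have h := (((hasDerivAt_id' u).const_mul y).const_add x).add
    ((hasDerivAt_pow 2 u).const_mul z)
  exact h.congr_deriv (by push_cast; ring)

theorem hasDerivAt_const_div {𝕜 : Type*} [NontriviallyNormedField 𝕜] (ρ : 𝕜) {u : 𝕜}
    (hu : u ≠ 0) : HasDerivAt (fun v ↦ ρ / v) (-(ρ / u ^ 2)) u := by
  simpa [div_eq_mul_inv] using (hasDerivAt_inv hu).const_mul ρ

theorem hasDerivAt_exp_div_mul {f : ℝ → ℝ} {f' u : ℝ} (ρ : ℝ) (hf : HasDerivAt f f' u)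
    (hu : u ≠ 0) :
    HasDerivAt (fun v ↦ Real.exp (ρ / v) * f v)
      (Real.exp (ρ / u) * (f' - ρ / u ^ 2 * f u)) u :=
  ((hasDerivAt_const_div ρ hu).exp.mul hf).congr_deriv (by ring)

/-- The quadratic `x + y u + z u²` weighted by `e^{ρ/u}`, the common shape of the coefficient
functions `P`, `Q` and `R`. At `u = 0` it takes the value `x`, because `ρ / 0 = 0`. -/
noncomputable def expQuadratic (ρ x y z u : ℝ) : ℝ :=
  Real.exp (ρ / u) * (x + y * u + z * u ^ 2)

/-- The operator `L F = (2u - ρ) F - u² F'`, through which the functions `P`, `Q` and `R` enter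
the determining equations (E3), (E1) and (E5). Its value is meaningful only where `F` is
differentiable. -/
noncomputable def determiningOperator (ρ : ℝ) (F : ℝ → ℝ) (u : ℝ) : ℝ :=
  (2 * u - ρ) * F u - u ^ 2 * deriv F u

theorem determiningOperator_congr (ρ : ℝ) {F G : ℝ → ℝ} {u : ℝ} (h : F =ᶠ[𝓝 u] G) :
    determiningOperator ρ F u = determiningOperator ρ G u := by
  rw [determiningOperator, determiningOperator, h.eq_of_nhds, h.deriv_eq]

theorem determiningOperator_exp_div_mul (ρ : ℝ) {f : ℝ → ℝ} {f' u : ℝ}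
    (hf : HasDerivAt f f' u) (hu : u ≠ 0) :
    determiningOperator ρ (fun v ↦ Real.exp (ρ / v) * f v) u =
      Real.exp (ρ / u) * (2 * u * f u - u ^ 2 * f') := by
  rw [determiningOperator, (hasDerivAt_exp_div_mul ρ hf hu).deriv]
  field_simp
  ring

theorem determiningOperator_expQuadratic (ρ x y z : ℝ) {u : ℝ} (hu : u ≠ 0) :
    determiningOperator ρ (expQuadratic ρ x y z) u = expQuadratic ρ 0 (2 * x) y u := by
  calc determiningOperator ρ (expQuadratic ρ x y z) u
      = Real.exp (ρ / u) *
          (2 * u * (x + y * u + z * u ^ 2) - u ^ 2 * (y + 2 * z * u)) :=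
        determiningOperator_exp_div_mul ρ (hasDerivAt_quadratic_s10 x y z u) hu
    _ = expQuadratic ρ 0 (2 * x) y u := by rw [expQuadratic]; ring

theorem determiningOperator_of_eqOn_expQuadratic {ρ x y z : ℝ} {F : ℝ → ℝ} {s : Set ℝ} {u : ℝ}
    (hF : Set.EqOn F (expQuadratic ρ x y z) s) (hs : s ∈ 𝓝 u) (hu : u ≠ 0) :
    determiningOperator ρ F u = expQuadratic ρ 0 (2 * x) y u := by
  rw [determiningOperator_congr ρ (hF.eventuallyEq_of_mem hs),
    determiningOperator_expQuadratic ρ x y z hu]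

/-- On `(0, ∞)`, the functions `P(u) = e^{ρ/u}(A + Bu + Cu²)`,
`Q(u) = −(1/2)e^{ρ/u}(Bu² + 2Au)`, `R(u) = e^{ρ/u} A u²` satisfy the six
determining equations (E1)–(E6) with `τ₁ = ρ`, `a₁ = 0`, `b₁ = 0`, `c₁ = 1`,
`a₂ = b₂ = c₂ = 0`. -/
theorem six_equations_unipotent_case
    (ρ A B C : ℝ) (hρ : ρ ≠ 0)
    (P Q R : ℝ → ℝ)
    (hP : ∀ u ∈ Set.Ioi (0 : ℝ),
      P u = Real.exp (ρ / u) * (A + B * u + C * u ^ 2))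
    (hQ : ∀ u ∈ Set.Ioi (0 : ℝ),
      Q u = -(1 / 2) * Real.exp (ρ / u) * (B * u ^ 2 + 2 * A * u))
    (hR : ∀ u ∈ Set.Ioi (0 : ℝ), R u = Real.exp (ρ / u) * (A * u ^ 2))
    (τ₁ a₁ a₂ b₁ b₂ c₁ c₂ : ℝ)
    (hτ₁ : τ₁ = ρ) (ha₁ : a₁ = 0) (hb₁ : b₁ = 0) (hc₁ : c₁ = 1)
    (ha₂ : a₂ = 0) (hb₂ : b₂ = 0) (hc₂ : c₂ = 0) :
    ∀ u ∈ Set.Ioi (0 : ℝ),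
      (-a₁ * P u + c₁ * R u - (a₁ + b₁ * u + c₁ * u ^ 2) * deriv Q u
          + (b₁ + 2 * c₁ * u - τ₁) * Q u = 0) ∧
      (a₂ * P u - c₂ * R u - (a₂ + b₂ * u + c₂ * u ^ 2) * deriv Q u
          + (b₂ + 2 * c₂ * u) * Q u = 0) ∧
      (2 * c₁ * Q u - (a₁ + b₁ * u + c₁ * u ^ 2) * deriv P u
          + (2 * c₁ * u - τ₁) * P u = 0) ∧
      (-2 * c₂ * Q u - (a₂ + b₂ * u + c₂ * u ^ 2) * deriv P u
          + (2 * b₂ + 2 * c₂ * u) * P u = 0) ∧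
      (-2 * a₁ * Q u - (a₁ + b₁ * u + c₁ * u ^ 2) * deriv R u
          + (2 * b₁ + 2 * c₁ * u - τ₁) * R u = 0) ∧
      (2 * a₂ * Q u - (a₂ + b₂ * u + c₂ * u ^ 2) * deriv R u
          + 2 * c₂ * u * R u = 0) := by
  subst hτ₁ ha₁ hb₁ hc₁ ha₂ hb₂ hc₂
  intro u hu
  have hP' : Set.EqOn P (expQuadratic τ₁ A B C) (Set.Ioi 0) := hP
  have hQ' : Set.EqOn Q (expQuadratic τ₁ 0 (-A) (-B / 2)) (Set.Ioi 0) := fun v hv ↦ by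
    rw [hQ v hv, expQuadratic]; ring
  have hR' : Set.EqOn R (expQuadratic τ₁ 0 0 A) (Set.Ioi 0) := fun v hv ↦ by
    rw [hR v hv, expQuadratic]; ring
  have hnhds : Set.Ioi 0 ∈ 𝓝 u := Ioi_mem_nhds hu
  have hu₀ : u ≠ 0 := ne_of_gt hu
  have hLP : determiningOperator τ₁ P u = -2 * Q u := by
    rw [determiningOperator_of_eqOn_expQuadratic hP' hnhds hu₀, hQ' hu, expQuadratic, expQuadratic]
    ring
  have hLQ : determiningOperator τ₁ Q u = -R u := by
    rw [determiningOperator_of_eqOn_expQuadratic hQ' hnhds hu₀, hR' hu, expQuadratic, expQuadratic]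
    ring
  have hLR : determiningOperator τ₁ R u = 0 := by
    rw [determiningOperator_of_eqOn_expQuadratic hR' hnhds hu₀, expQuadratic]
    ring
  rw [determiningOperator] at hLP hLQ hLR
  exact ⟨by linear_combination hLQ, by ring, by linear_combination hLP, by ring,
    by linear_combination hLR, by ring⟩
end

section
/- Let ρ ≠ 0, b₁ ≠ 0 and A, B, C ∈ ℝ, and on the interval (0, ∞) define P(u) = A u^ρ, Q(u) = B u^{1+ρ}, R(u) = C u^{2+ρ} (real powers). Then the six determining equations (E1)–(E6) hold for all u > 0 with the parameter values τ₁ = −ρ b₁, a₁ = 0, c₁ = 0, a₂ = b₂ = c₂ = 0 (b₁ arbitrary nonzero). -/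
/-!
The vector field `b₁ u ∂ᵤ` generates the scalings of `(0, ∞)`, and a power function of exponent `s`
is an eigenfunction of `u ∂ᵤ` with eigenvalue `s`. Once `a₁ = c₁ = 0` and `τ₁ = -ρ b₁`, the
equations (E3), (E1), (E5) are `-b₁` times this eigenvalue equation for the exponents `ρ`, `1 + ρ`,
`2 + ρ` of `P`, `Q`, `R`; the other three equations have only zero coefficients.
-/

open Filter Topology

theorem mul_deriv_const_mul_rpow {x : ℝ} (hx : x ≠ 0) (K s : ℝ) :
    x * deriv (fun y ↦ K * y ^ s) x = s * (K * x ^ s) := by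
  have hderiv : HasDerivAt (fun y ↦ K * y ^ s) (K * (s * x ^ (s - 1))) x :=
    (Real.hasDerivAt_rpow_const (Or.inl hx)).const_mul K
  calc
    x * deriv (fun y ↦ K * y ^ s) x = s * (K * (x ^ (s - 1) * x)) := by rw [hderiv.deriv]; ring
    _ = s * (K * x ^ s) := by rw [← Real.rpow_add_one hx, sub_add_cancel]

theorem mul_deriv_of_eventuallyEq_const_mul_rpow {F : ℝ → ℝ} {K s x : ℝ} (hx : x ≠ 0)
    (hF : F =ᶠ[𝓝 x] fun y ↦ K * y ^ s) : x * deriv F x = s * F x := by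
  rw [hF.deriv_eq, hF.eq_of_nhds, mul_deriv_const_mul_rpow hx]

/-- On `(0, ∞)`, the power functions `P(u) = A u^ρ`, `Q(u) = B u^{1+ρ}`,
`R(u) = C u^{2+ρ}` satisfy the six determining equations (E1)–(E6) with
`τ₁ = −ρ b₁`, `a₁ = 0`, `c₁ = 0`, `a₂ = b₂ = c₂ = 0`, for any `b₁ ≠ 0`. -/
theorem six_equations_power_case
    (ρ A B C : ℝ) (hρ : ρ ≠ 0)
    (P Q R : ℝ → ℝ)
    (hP : ∀ u ∈ Set.Ioi (0 : ℝ), P u = A * u ^ ρ)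
    (hQ : ∀ u ∈ Set.Ioi (0 : ℝ), Q u = B * u ^ (1 + ρ))
    (hR : ∀ u ∈ Set.Ioi (0 : ℝ), R u = C * u ^ (2 + ρ))
    (τ₁ a₁ a₂ b₁ b₂ c₁ c₂ : ℝ) (hb₁ : b₁ ≠ 0)
    (hτ₁ : τ₁ = -ρ * b₁) (ha₁ : a₁ = 0) (hc₁ : c₁ = 0)
    (ha₂ : a₂ = 0) (hb₂ : b₂ = 0) (hc₂ : c₂ = 0) :
    ∀ u ∈ Set.Ioi (0 : ℝ),
      (-a₁ * P u + c₁ * R u - (a₁ + b₁ * u + c₁ * u ^ 2) * deriv Q u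
          + (b₁ + 2 * c₁ * u - τ₁) * Q u = 0) ∧
      (a₂ * P u - c₂ * R u - (a₂ + b₂ * u + c₂ * u ^ 2) * deriv Q u
          + (b₂ + 2 * c₂ * u) * Q u = 0) ∧
      (2 * c₁ * Q u - (a₁ + b₁ * u + c₁ * u ^ 2) * deriv P u
          + (2 * c₁ * u - τ₁) * P u = 0) ∧
      (-2 * c₂ * Q u - (a₂ + b₂ * u + c₂ * u ^ 2) * deriv P u
          + (2 * b₂ + 2 * c₂ * u) * P u = 0) ∧
      (-2 * a₁ * Q u - (a₁ + b₁ * u + c₁ * u ^ 2) * deriv R u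
          + (2 * b₁ + 2 * c₁ * u - τ₁) * R u = 0) ∧
      (2 * a₂ * Q u - (a₂ + b₂ * u + c₂ * u ^ 2) * deriv R u
          + 2 * c₂ * u * R u = 0) := by
  intro u hu
  have hu_ne : u ≠ 0 := ne_of_gt hu
  have hu_nhds : Set.Ioi 0 ∈ 𝓝 u := Ioi_mem_nhds hu
  have eulerP : u * deriv P u = ρ * P u :=
    mul_deriv_of_eventuallyEq_const_mul_rpow hu_ne (eventuallyEq_of_mem hu_nhds hP)
  have eulerQ : u * deriv Q u = (1 + ρ) * Q u :=
    mul_deriv_of_eventuallyEq_const_mul_rpow hu_ne (eventuallyEq_of_mem hu_nhds hQ)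
  have eulerR : u * deriv R u = (2 + ρ) * R u :=
    mul_deriv_of_eventuallyEq_const_mul_rpow hu_ne (eventuallyEq_of_mem hu_nhds hR)
  subst hτ₁ ha₁ hc₁ ha₂ hb₂ hc₂
  refine ⟨?_, by ring, ?_, by ring, ?_, by ring⟩
  · linear_combination -b₁ * eulerQ
  · linear_combination -b₁ * eulerP
  · linear_combination -b₁ * eulerR
end

section
/- Let ρ ≠ 0, a₁ ≠ 0 and A, B, C ∈ ℝ, and define P(u) = A e^{ρu}, Q(u) = e^{ρu}(−Au + B), R(u) = e^{ρu}(Au² − 2Bu + C). Then the six determining equations (E1)–(E6) hold for all u ∈ ℝ with the parameter values τ₁ = −a₁ρ, b₁ = 0, c₁ = 0, a₂ = b₂ = c₂ = 0 (a₁ arbitrary nonzero). -/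
/-!
Write `P`, `Q`, `R` as `e^{ρu}` times the polynomials `p = A`, `q = -Au + B`,
`r = Au² - 2Bu + C`. Conjugation by `e^{ρu}` turns `d/du - ρ` into `d/du`, so the relations
`p' = 0`, `q' = -p`, `r' = -2q` become the linear system `P' = ρP`, `Q' = ρQ - P`, `R' = ρR - 2Q`.
At the given parameters this system, multiplied by `a₁`, is (E3), (E1), (E5), while (E2), (E4), (E6)
are `0 = 0`.
-/

theorem hasDerivAt_exp_mul_smul {E : Type*} [NormedAddCommGroup E] [NormedSpace ℝ E]
    (ρ : ℝ) {p : ℝ → E} {p' : E} {u : ℝ} (hp : HasDerivAt p p' u) :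
    HasDerivAt (fun v ↦ Real.exp (ρ * v) • p v)
      (ρ • Real.exp (ρ * u) • p u + Real.exp (ρ * u) • p') u := by
  have hexp : HasDerivAt (fun v ↦ Real.exp (ρ * v)) (Real.exp (ρ * u) * ρ) u :=
    (hasDerivAt_const_mul ρ).exp
  exact (hexp.smul hp).congr_deriv (by rw [add_comm, smul_smul, mul_comm _ ρ])

theorem hasDerivAt_exp_mul_mul_linear (ρ a b u : ℝ) :
    HasDerivAt (fun v ↦ Real.exp (ρ * v) * (a * v + b))
      (ρ * (Real.exp (ρ * u) * (a * u + b)) + Real.exp (ρ * u) * a) u :=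
  hasDerivAt_exp_mul_smul ρ ((hasDerivAt_const_mul a).add_const b)

theorem hasDerivAt_exp_mul_mul_quadratic (ρ a b c u : ℝ) :
    HasDerivAt (fun v ↦ Real.exp (ρ * v) * (a * v ^ 2 + b * v + c))
      (ρ * (Real.exp (ρ * u) * (a * u ^ 2 + b * u + c))
        + Real.exp (ρ * u) * (2 * a * u + b)) u := by
  have hquad : HasDerivAt (fun v ↦ a * v ^ 2 + b * v + c) (2 * a * u + b) u :=
    ((((hasDerivAt_pow 2 u).const_mul a).add (hasDerivAt_const_mul b)).add_const c).congr_deriv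
      (by ring)
  exact hasDerivAt_exp_mul_smul ρ hquad

/-- The functions `P(u) = A e^{ρu}`, `Q(u) = e^{ρu}(−Au + B)`,
`R(u) = e^{ρu}(Au² − 2Bu + C)` satisfy the six determining equations
(E1)–(E6) with `τ₁ = −a₁ρ`, `b₁ = 0`, `c₁ = 0`, `a₂ = b₂ = c₂ = 0`,
for any `a₁ ≠ 0`. -/
theorem six_equations_exponential_case
    (ρ A B C : ℝ) (hρ : ρ ≠ 0)
    (P Q R : ℝ → ℝ)
    (hP : ∀ u : ℝ, P u = A * Real.exp (ρ * u))
    (hQ : ∀ u : ℝ, Q u = Real.exp (ρ * u) * (-A * u + B))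
    (hR : ∀ u : ℝ, R u = Real.exp (ρ * u) * (A * u ^ 2 - 2 * B * u + C))
    (τ₁ a₁ a₂ b₁ b₂ c₁ c₂ : ℝ) (ha₁ : a₁ ≠ 0)
    (hτ₁ : τ₁ = -a₁ * ρ) (hb₁ : b₁ = 0) (hc₁ : c₁ = 0)
    (ha₂ : a₂ = 0) (hb₂ : b₂ = 0) (hc₂ : c₂ = 0) :
    ∀ u : ℝ,
      (-a₁ * P u + c₁ * R u - (a₁ + b₁ * u + c₁ * u ^ 2) * deriv Q u
          + (b₁ + 2 * c₁ * u - τ₁) * Q u = 0) ∧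
      (a₂ * P u - c₂ * R u - (a₂ + b₂ * u + c₂ * u ^ 2) * deriv Q u
          + (b₂ + 2 * c₂ * u) * Q u = 0) ∧
      (2 * c₁ * Q u - (a₁ + b₁ * u + c₁ * u ^ 2) * deriv P u
          + (2 * c₁ * u - τ₁) * P u = 0) ∧
      (-2 * c₂ * Q u - (a₂ + b₂ * u + c₂ * u ^ 2) * deriv P u
          + (2 * b₂ + 2 * c₂ * u) * P u = 0) ∧
      (-2 * a₁ * Q u - (a₁ + b₁ * u + c₁ * u ^ 2) * deriv R u
          + (2 * b₁ + 2 * c₁ * u - τ₁) * R u = 0) ∧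
      (2 * a₂ * Q u - (a₂ + b₂ * u + c₂ * u ^ 2) * deriv R u
          + 2 * c₂ * u * R u = 0) := by
  intro u
  have hP' : deriv P u = ρ * P u := by
    simpa [funext hP, mul_comm A] using (hasDerivAt_exp_mul_smul ρ (hasDerivAt_const u A)).deriv
  have hQ' : deriv Q u = ρ * Q u - P u := by
    rw [hP, funext hQ, (hasDerivAt_exp_mul_mul_linear ρ (-A) B u).deriv]
    ring
  have hR' : deriv R u = ρ * R u - 2 * Q u := by
    have hR_add : R = fun v ↦ Real.exp (ρ * v) * (A * v ^ 2 + (-2 * B) * v + C) :=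
      funext fun v ↦ by rw [hR]; ring
    rw [hQ, hR_add, (hasDerivAt_exp_mul_mul_quadratic ρ A (-2 * B) C u).deriv]
    ring
  subst hτ₁ hb₁ hc₁ ha₂ hb₂ hc₂
  rw [hP', hQ', hR']
  refine ⟨?_, ?_, ?_, ?_, ?_, ?_⟩ <;> ring
end

section
/- Let A ∈ ℝ, λ > 0, and let u : ℤ → I → ℝ (I ⊆ ℝ an open interval) be differentiable with uₙ₊₁(t) ≠ uₙ₋₁(t) for all n, t, satisfying u̇ₙ = e^{uₙ} · [uₙ₊₁uₙ₋₁ + (A − uₙ)(uₙ₊₁+uₙ₋₁) + uₙ² − 2Auₙ]/(uₙ₊₁−uₙ₋₁) for all n ∈ ℤ, t ∈ I. Then the functions vₙ(t) := uₙ(λt) + log λ, defined for λt ∈ I, satisfy the same equation: v̇ₙ = e^{vₙ}[vₙ₊₁vₙ₋₁ + (A − vₙ)(vₙ₊₁+vₙ₋₁) + vₙ² − 2Avₙ]/(vₙ₊₁−vₙ₋₁). -/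
/-!
The bracket in equation (5.3) equals `(x - y) * (z - y) + A * (x + z - 2 * y)`, where `x, y, z`
stand for `uₙ₋₁, uₙ, uₙ₊₁`. It depends on differences only, and so does the denominator `z - x`.
Adding a constant `c` to all `uₙ` therefore multiplies the right-hand side by `exp c`, through the
factor `exp y` alone, and running time faster by the factor `exp c` multiplies the left-hand side
by the same number.
-/

namespace LatticeEquation

variable {𝕜 : Type*} [RCLike 𝕜]

/-- The right-hand side of equation (5.3), with `x, y, z` standing for `uₙ₋₁, uₙ, uₙ₊₁`. -/
noncomputable def velocity (A x y z : 𝕜) : 𝕜 :=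
  NormedSpace.exp y * (z * x + (A - y) * (z + x) + y ^ 2 - 2 * A * y) / (z - x)

/-- The family `u` solves equation (5.3) at every time in `s`. Nonvanishing of the denominators is
part of the notion. The set `s` is arbitrary and derivatives are taken in `𝕜`, not within `s`. -/
structure IsSolutionOn (A : 𝕜) (s : Set 𝕜) (u : ℤ → 𝕜 → 𝕜) : Prop where
  ne : ∀ n, ∀ t ∈ s, u (n + 1) t ≠ u (n - 1) t
  hasDerivAt : ∀ n, ∀ t ∈ s, HasDerivAt (u n) (velocity A (u (n - 1) t) (u n t) (u (n + 1) t)) t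

theorem velocity_add_right (A x y z c : 𝕜) :
    velocity A (x + c) (y + c) (z + c) = NormedSpace.exp c * velocity A x y z := by
  have bracket_add_right :
      (z + c) * (x + c) + (A - (y + c)) * (z + c + (x + c)) + (y + c) ^ 2 - 2 * A * (y + c) =
        z * x + (A - y) * (z + x) + y ^ 2 - 2 * A * y := by
    ring
  let : NormedAlgebra ℚ 𝕜 := .restrictScalars ℚ ℝ 𝕜
  rw [velocity, velocity, bracket_add_right, add_sub_add_right_eq_sub, NormedSpace.exp_add]
  ring

theorem isSolutionOn_real_iff {A : ℝ} {s : Set ℝ} {u : ℤ → ℝ → ℝ} :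
    IsSolutionOn A s u ↔
      (∀ n, ∀ t ∈ s, u (n + 1) t ≠ u (n - 1) t) ∧
      (∀ n, ∀ t ∈ s, DifferentiableAt ℝ (u n) t) ∧
      ∀ n, ∀ t ∈ s, deriv (u n) t =
        Real.exp (u n t) *
          (u (n + 1) t * u (n - 1) t
            + (A - u n t) * (u (n + 1) t + u (n - 1) t)
            + (u n t) ^ 2 - 2 * A * u n t)
        / (u (n + 1) t - u (n - 1) t) := by
  rw [Real.exp_eq_exp_ℝ]
  constructor
  · rintro ⟨hne, hderiv⟩
    exact ⟨hne, fun n t ht ↦ (hderiv n t ht).differentiableAt, fun n t ht ↦ (hderiv n t ht).deriv⟩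
  · rintro ⟨hne, hdiff, heq⟩
    exact ⟨hne, fun n t ht ↦ (hdiff n t ht).hasDerivAt.congr_deriv (heq n t ht)⟩

end LatticeEquation

open LatticeEquation

theorem symmetry_of_eq_5_3_general {𝕜 : Type*} [RCLike 𝕜] {A : 𝕜} {s : Set 𝕜} {u : ℤ → 𝕜 → 𝕜}
    (hu : IsSolutionOn A s u) (c : 𝕜) :
    IsSolutionOn A {t | NormedSpace.exp c * t ∈ s} fun n t ↦ u n (NormedSpace.exp c * t) + c where
  ne n t ht := (add_left_injective c).ne (hu.ne n _ ht)
  hasDerivAt n t ht := by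
    rw [velocity_add_right, mul_comm]
    exact ((hu.hasDerivAt n _ ht).comp t (hasDerivAt_const_mul (NormedSpace.exp c))).add_const c

/-- The transformation `vₙ(t) = uₙ(λt) + log λ` (the symmetry generated by
`X₁ = t∂ₜ − ∂_{uₙ}`) maps solutions of equation (5.3),
`u̇ₙ = e^{uₙ}[uₙ₊₁uₙ₋₁ + (A − uₙ)(uₙ₊₁+uₙ₋₁) + uₙ² − 2Auₙ]/(uₙ₊₁−uₙ₋₁)`,
to solutions of the same equation. -/
theorem symmetry_of_eq_5_3
    (A lam : ℝ) (hlam : 0 < lam)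
    (I : Set ℝ) (hIopen : IsOpen I) (hIconn : I.OrdConnected)
    (u : ℤ → ℝ → ℝ)
    (hdiff : ∀ (n : ℤ), ∀ t ∈ I, DifferentiableAt ℝ (u n) t)
    (hne : ∀ (n : ℤ), ∀ t ∈ I, u (n + 1) t ≠ u (n - 1) t)
    (heq : ∀ (n : ℤ), ∀ t ∈ I,
      deriv (u n) t =
        Real.exp (u n t) *
          (u (n + 1) t * u (n - 1) t
            + (A - u n t) * (u (n + 1) t + u (n - 1) t)
            + (u n t) ^ 2 - 2 * A * u n t)
        / (u (n + 1) t - u (n - 1) t))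
    (v : ℤ → ℝ → ℝ) (hv : v = fun n t => u n (lam * t) + Real.log lam) :
    ∀ (n : ℤ) (t : ℝ), lam * t ∈ I →
      deriv (v n) t =
        Real.exp (v n t) *
          (v (n + 1) t * v (n - 1) t
            + (A - v n t) * (v (n + 1) t + v (n - 1) t)
            + (v n t) ^ 2 - 2 * A * v n t)
        / (v (n + 1) t - v (n - 1) t) := by
  have hsol := symmetry_of_eq_5_3_general (isSolutionOn_real_iff.mpr ⟨hne, hdiff, heq⟩)
    (Real.log lam)
  rw [← Real.exp_eq_exp_ℝ, Real.exp_log hlam, ← hv] at hsol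
  exact (isSolutionOn_real_iff.mp hsol).2.2
end

section
/- Let ρ ≠ 0, s ∈ ℝ, and let u : ℤ → I → ℝ (I ⊆ ℝ an open interval) be differentiable with uₙ₊₁(t) ≠ uₙ₋₁(t) for all n, t, satisfying u̇ₙ = e^{ρ·arctan uₙ}(uₙ₊₁uₙ₋₁ + 1)(1 + uₙ²)/(uₙ₊₁−uₙ₋₁) for all n, t. Assume moreover that |arctan(uₙ(e^{ρs}t)) + s| < π/2 for all n and all t with e^{ρs}t ∈ I, and that the functions vₙ(t) := tan(arctan(uₙ(e^{ρs}t)) + s) satisfy vₙ₊₁(t) ≠ vₙ₋₁(t). Then v satisfies the same equation: v̇ₙ = e^{ρ·arctan vₙ}(vₙ₊₁vₙ₋₁ + 1)(1 + vₙ²)/(vₙ₊₁−vₙ₋₁). -/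
open Real

/-!
In the angle variable `θₙ = arctan uₙ` equation (5.1) reads `θ̇ₙ = e^{ρθₙ} cot(θₙ₊₁ − θₙ₋₁)`. A
common shift `θₙ ↦ θₙ + s` leaves the cotangent unchanged and multiplies the right-hand side by
`e^{ρs}`, which the time dilation `t ↦ e^{ρs}t` compensates.
-/

theorem tan_eq_tan_iff_sin_sub_eq_zero {a b : ℝ} (ha : cos a ≠ 0) (hb : cos b ≠ 0) :
    tan a = tan b ↔ sin (a - b) = 0 := by
  rw [tan_eq_sin_div_cos, tan_eq_sin_div_cos, div_eq_div_iff ha hb, sin_sub, sub_eq_zero,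
    mul_comm (sin b)]

theorem cot_sub_eq_tan_mul_tan_add_one_div {a b : ℝ} (ha : cos a ≠ 0) (hb : cos b ≠ 0) :
    cot (a - b) = (tan a * tan b + 1) / (tan a - tan b) := by
  rw [← tan_inv_eq_cot, tan_sub' ⟨cos_ne_zero_iff.1 ha, cos_ne_zero_iff.1 hb⟩, inv_div, add_comm]

/-- `u` solves equation (5.1) with parameter `ρ` at all times in `I`. The field `ne` keeps the
denominator `uₙ₊₁ − uₙ₋₁` away from zero. -/
structure IsEq51SolutionOn (ρ : ℝ) (I : Set ℝ) (u : ℤ → ℝ → ℝ) : Prop where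
  ne (n : ℤ) {t : ℝ} (ht : t ∈ I) : u (n + 1) t ≠ u (n - 1) t
  hasDerivAt (n : ℤ) {t : ℝ} (ht : t ∈ I) :
    HasDerivAt (u n)
      (exp (ρ * arctan (u n t)) * (u (n + 1) t * u (n - 1) t + 1) * (1 + u n t ^ 2)
        / (u (n + 1) t - u (n - 1) t)) t

/-- `θ` solves, at all times in `I`, the equation `θ̇ₙ = e^{ρθₙ} cot(θₙ₊₁ − θₙ₋₁)` that (5.1)
becomes under `uₙ = tan θₙ`. The field `sin_sub_ne_zero` keeps the cotangent away from its poles. -/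
structure IsAngleSolutionOn (ρ : ℝ) (I : Set ℝ) (θ : ℤ → ℝ → ℝ) : Prop where
  sin_sub_ne_zero (n : ℤ) {t : ℝ} (ht : t ∈ I) : sin (θ (n + 1) t - θ (n - 1) t) ≠ 0
  hasDerivAt (n : ℤ) {t : ℝ} (ht : t ∈ I) :
    HasDerivAt (θ n) (exp (ρ * θ n t) * cot (θ (n + 1) t - θ (n - 1) t)) t

section

variable {ρ : ℝ} {I : Set ℝ}

theorem IsEq51SolutionOn.arctan {u : ℤ → ℝ → ℝ} (hu : IsEq51SolutionOn ρ I u) :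
    IsAngleSolutionOn ρ I (fun n t => arctan (u n t)) where
  sin_sub_ne_zero n t ht := by
    rw [Ne, ← tan_eq_tan_iff_sin_sub_eq_zero (cos_arctan_pos _).ne' (cos_arctan_pos _).ne',
      tan_arctan, tan_arctan]
    exact hu.ne n ht
  hasDerivAt n t ht := by
    refine (hu.hasDerivAt n ht).arctan.congr_deriv ?_
    rw [cot_sub_eq_tan_mul_tan_add_one_div (cos_arctan_pos _).ne' (cos_arctan_pos _).ne',
      tan_arctan, tan_arctan]
    have one_add_sq_ne_zero : 1 + u n t ^ 2 ≠ 0 := by positivity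
    field_simp

theorem IsAngleSolutionOn.comp_mul_left_add_const {θ : ℤ → ℝ → ℝ} (hθ : IsAngleSolutionOn ρ I θ)
    (s : ℝ) :
    IsAngleSolutionOn ρ ((exp (ρ * s) * ·) ⁻¹' I) (fun n t => θ n (exp (ρ * s) * t) + s) where
  sin_sub_ne_zero n t ht := by
    rw [add_sub_add_right_eq_sub]
    exact hθ.sin_sub_ne_zero n ht
  hasDerivAt n t ht := by
    have hasDerivAt_dilate :=
      (hθ.hasDerivAt n ht).comp t (hasDerivAt_const_mul (exp (ρ * s)))
    refine (hasDerivAt_dilate.add_const s).congr_deriv ?_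
    rw [add_sub_add_right_eq_sub, mul_add, exp_add]
    ring

theorem IsAngleSolutionOn.tan {θ : ℤ → ℝ → ℝ} (hθ : IsAngleSolutionOn ρ I θ)
    (hbranch : ∀ n, ∀ t ∈ I, |θ n t| < π / 2) :
    IsEq51SolutionOn ρ I (fun n t => tan (θ n t)) := by
  have cos_ne_zero (n : ℤ) {t : ℝ} (ht : t ∈ I) : cos (θ n t) ≠ 0 :=
    (cos_pos_of_mem_Ioo (abs_lt.1 (hbranch n t ht))).ne'
  refine ⟨fun n t ht => ?_, fun n t ht => ?_⟩
  · rw [Ne, tan_eq_tan_iff_sin_sub_eq_zero (cos_ne_zero _ ht) (cos_ne_zero _ ht)]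
    exact hθ.sin_sub_ne_zero n ht
  · have arctan_tan_eq : Real.arctan (Real.tan (θ n t)) = θ n t :=
      arctan_tan (abs_lt.1 (hbranch n t ht)).1 (abs_lt.1 (hbranch n t ht)).2
    refine ((hasDerivAt_tan (cos_ne_zero n ht)).comp t (hθ.hasDerivAt n ht)).congr_deriv ?_
    rw [arctan_tan_eq, ← inv_one_add_tan_sq (cos_ne_zero n ht), one_div, inv_inv,
      cot_sub_eq_tan_mul_tan_add_one_div (cos_ne_zero _ ht) (cos_ne_zero _ ht)]
    ring

theorem symmetry_of_eq_5_1_general {u : ℤ → ℝ → ℝ} (hu : IsEq51SolutionOn ρ I u) (s : ℝ)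
    (hbranch : ∀ (n : ℤ) (t : ℝ), exp (ρ * s) * t ∈ I →
      |arctan (u n (exp (ρ * s) * t)) + s| < π / 2) :
    IsEq51SolutionOn ρ ((exp (ρ * s) * ·) ⁻¹' I)
      (fun n t => tan (arctan (u n (exp (ρ * s) * t)) + s)) :=
  (hu.arctan.comp_mul_left_add_const s).tan hbranch

end

/-- The transformation `vₙ(t) = tan(arctan(uₙ(e^{ρs}t)) + s)` (the symmetry
generated by `X₁ = t∂ₜ − (1/ρ)(1 + uₙ²)∂_{uₙ}`) maps solutions of equation
(5.1), `u̇ₙ = e^{ρ arctan uₙ}(uₙ₊₁uₙ₋₁ + 1)(1 + uₙ²)/(uₙ₊₁−uₙ₋₁)`,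
to solutions of the same equation. -/
theorem symmetry_of_eq_5_1
    (ρ s : ℝ) (hρ : ρ ≠ 0)
    (I : Set ℝ) (hIopen : IsOpen I) (hIconn : I.OrdConnected)
    (u : ℤ → ℝ → ℝ)
    (hdiff : ∀ (n : ℤ), ∀ t ∈ I, DifferentiableAt ℝ (u n) t)
    (hne : ∀ (n : ℤ), ∀ t ∈ I, u (n + 1) t ≠ u (n - 1) t)
    (heq : ∀ (n : ℤ), ∀ t ∈ I,
      deriv (u n) t =
        Real.exp (ρ * Real.arctan (u n t)) *
          (u (n + 1) t * u (n - 1) t + 1) * (1 + (u n t) ^ 2)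
        / (u (n + 1) t - u (n - 1) t))
    (v : ℤ → ℝ → ℝ)
    (hv : v = fun n t => Real.tan (Real.arctan (u n (Real.exp (ρ * s) * t)) + s))
    (hbranch : ∀ (n : ℤ) (t : ℝ), Real.exp (ρ * s) * t ∈ I →
      |Real.arctan (u n (Real.exp (ρ * s) * t)) + s| < π / 2)
    (hvne : ∀ (n : ℤ) (t : ℝ), Real.exp (ρ * s) * t ∈ I →
      v (n + 1) t ≠ v (n - 1) t) :
    ∀ (n : ℤ) (t : ℝ), Real.exp (ρ * s) * t ∈ I →
      deriv (v n) t =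
        Real.exp (ρ * Real.arctan (v n t)) *
          (v (n + 1) t * v (n - 1) t + 1) * (1 + (v n t) ^ 2)
        / (v (n + 1) t - v (n - 1) t) := by
  subst hv
  have hu : IsEq51SolutionOn ρ I u :=
    ⟨hne, fun n t ht => heq n t ht ▸ (hdiff n t ht).hasDerivAt⟩
  exact fun n t ht => ((symmetry_of_eq_5_1_general hu s hbranch).hasDerivAt n ht).deriv
end

section
/- Let ρ ≠ 0 and let γ : ℤ → ℝ satisfy tan(γₙ₊₁ − γₙ₋₁) = −ρ e^{ργₙ} for all n ∈ ℤ. Define uₙ(t) = tan(γₙ − (1/ρ)log t) for t > 0. Then at every n ∈ ℤ and t > 0 such that cos(γₘ − (1/ρ)log t) ≠ 0 for m ∈ {n−1, n, n+1} and uₙ₊₁(t) ≠ uₙ₋₁(t), the function u satisfies u̇ₙ = e^{ρ·arctan uₙ}(uₙ₊₁uₙ₋₁ + 1)(1 + uₙ²)/(uₙ₊₁−uₙ₋₁), where arctan uₙ is understood as γₙ − (1/ρ)log t reduced to (−π/2, π/2) modulo π (equivalently, e^{ρ arctan uₙ} may be replaced by e^{ργₙ} t^{−1} when γₙ − (1/ρ)log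 t ∈ (−π/2, π/2)). -/
open Real

/-!
For `xₘ = γₘ - (1 / ρ) log t` and `uₘ = tan xₘ`, the subtraction formula for `tan` says that
`(uₙ₊₁ uₙ₋₁ + 1) / (uₙ₊₁ - uₙ₋₁)` is the reciprocal of `tan (xₙ₊₁ - xₙ₋₁)`. The logarithm cancels
in `xₙ₊₁ - xₙ₋₁ = γₙ₊₁ - γₙ₋₁`, so by the recursion the quotient is `-1 / (ρ e^{ργₙ})` at all times.
Since `e^{ρ xₙ} = e^{ργₙ} / t`, the right-hand side of the equation collapses to
`-(1 + uₙ²) / (ρ t)`, which is the derivative of `tan xₙ` by the chain rule.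
-/

/- When `tan (x - y) = 0`, either `sin (x - y) = 0` or `cos (x - y) = 0`; in the first case the
denominator on the right vanishes and in the second the numerator, so both sides are `0`. -/
lemma inv_tan_sub {x y : ℝ} (hx : cos x ≠ 0) (hy : cos y ≠ 0) :
    (tan (x - y))⁻¹ = (tan x * tan y + 1) / (tan x - tan y) := by
  have hnum : tan x * tan y + 1 = cos (x - y) / (cos x * cos y) := by
    rw [tan_eq_sin_div_cos, tan_eq_sin_div_cos, cos_sub]
    field_simp
    ring
  have hden : tan x - tan y = sin (x - y) / (cos x * cos y) := by
    rw [tan_eq_sin_div_cos, tan_eq_sin_div_cos, sin_sub]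
    field_simp
  rw [hnum, hden, div_div_div_cancel_right₀ (mul_ne_zero hx hy), tan_eq_sin_div_cos, inv_div]

lemma hasDerivAt_tan_eq_one_add_sq {x : ℝ} (hx : cos x ≠ 0) :
    HasDerivAt tan (1 + tan x ^ 2) x := by
  rw [← inv_inv (1 + tan x ^ 2), inv_one_add_tan_sq hx, ← one_div]
  exact hasDerivAt_tan hx

lemma hasDerivAt_tan_sub_log (ρ c : ℝ) {t : ℝ} (ht : t ≠ 0)
    (hcos : cos (c - 1 / ρ * log t) ≠ 0) :
    HasDerivAt (fun s => tan (c - 1 / ρ * log s))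
      (-(1 + tan (c - 1 / ρ * log t) ^ 2) / (ρ * t)) t := by
  have hangle : HasDerivAt (fun s => c - 1 / ρ * log s) (-(1 / ρ * t⁻¹)) t :=
    ((hasDerivAt_log ht).const_mul (1 / ρ)).const_sub c
  refine ((hasDerivAt_tan_eq_one_add_sq hcos).comp t hangle).congr_deriv ?_
  ring

lemma exp_mul_sub_log {ρ t : ℝ} (hρ : ρ ≠ 0) (ht : 0 < t) (c : ℝ) :
    exp (ρ * (c - 1 / ρ * log t)) = exp (ρ * c) / t := by
  rw [mul_sub, ← mul_assoc, mul_one_div_cancel hρ, one_mul, exp_sub, exp_log ht]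

/- Equation (5.1) for `a, b, c = γₙ₊₁, γₙ₋₁, γₙ`, without fixing a branch of the arctangent:
`exp (ρ * c) / t` stands in place of `exp (ρ * arctan uₙ)`. -/
lemma hasDerivAt_tan_sub_log_of_tan_sub_eq {ρ a b c t : ℝ}
    (hrec : tan (a - b) = -ρ * exp (ρ * c)) (ht : t ≠ 0)
    (ha : cos (a - 1 / ρ * log t) ≠ 0) (hb : cos (b - 1 / ρ * log t) ≠ 0)
    (hc : cos (c - 1 / ρ * log t) ≠ 0) :
    HasDerivAt (fun s => tan (c - 1 / ρ * log s))
      (exp (ρ * c) / t *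
        (tan (a - 1 / ρ * log t) * tan (b - 1 / ρ * log t) + 1) *
          (1 + tan (c - 1 / ρ * log t) ^ 2) /
        (tan (a - 1 / ρ * log t) - tan (b - 1 / ρ * log t))) t := by
  refine (hasDerivAt_tan_sub_log ρ c ht hc).congr_deriv ?_
  have hquot := inv_tan_sub ha hb
  rw [sub_sub_sub_cancel_right, hrec] at hquot
  rw [mul_right_comm, mul_div_assoc, ← hquot]
  field_simp

/-- Group-invariant solutions of equation (5.1): if `γ : ℤ → ℝ` satisfies the
three-point recursion `tan(γₙ₊₁ − γₙ₋₁) = −ρ e^{ργₙ}`, then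
`uₙ(t) = tan(γₙ − (1/ρ) log t)` satisfies
`u̇ₙ = e^{ρ arctan uₙ}(uₙ₊₁uₙ₋₁ + 1)(1 + uₙ²)/(uₙ₊₁−uₙ₋₁)` at every `t > 0`
where the three relevant cosines are nonzero, `uₙ₊₁(t) ≠ uₙ₋₁(t)`, and the
angle `γₙ − (1/ρ) log t` lies in the principal branch `(−π/2, π/2)`
(so that `arctan uₙ = γₙ − (1/ρ) log t`). -/
theorem invariant_solution_eq_5_1
    (ρ : ℝ) (hρ : ρ ≠ 0) (γ : ℤ → ℝ)
    (hrec : ∀ n : ℤ, Real.tan (γ (n + 1) - γ (n - 1)) = -ρ * Real.exp (ρ * γ n))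
    (u : ℤ → ℝ → ℝ)
    (hu : u = fun n t => Real.tan (γ n - (1 / ρ) * Real.log t)) :
    ∀ (n : ℤ) (t : ℝ), 0 < t →
      (∀ m ∈ ({n - 1, n, n + 1} : Set ℤ),
        Real.cos (γ m - (1 / ρ) * Real.log t) ≠ 0) →
      u (n + 1) t ≠ u (n - 1) t →
      γ n - (1 / ρ) * Real.log t ∈ Set.Ioo (-(π / 2)) (π / 2) →
      deriv (u n) t =
        Real.exp (ρ * Real.arctan (u n t)) *
          (u (n + 1) t * u (n - 1) t + 1) * (1 + (u n t) ^ 2)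
        / (u (n + 1) t - u (n - 1) t) := by
  rintro n t ht hcos - hbranch
  subst hu
  have hderiv := hasDerivAt_tan_sub_log_of_tan_sub_eq (hrec n) ht.ne'
    (hcos (n + 1) (by simp)) (hcos (n - 1) (by simp)) (hcos n (by simp))
  rw [arctan_tan hbranch.1 hbranch.2, exp_mul_sub_log hρ ht]
  exact hderiv.deriv
end
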